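/- arXiv:1407.8483 — 5 statements merged into one kernel-verified Lean document; each statement's English description precedes it below -/
import Mathlib

section
/- Fix real parameters t, γ with 0 < γ < t and fix r with 0 < r ≤ 1. For any sequences of integers n → ∞ and m = m(n) with 0 ≤ m < n and (n−m)/n → r, the free energy per site converges: lim_{n→∞} (1/((n−m)n)) · ln Z_{n−m,n} = ln[sinh(t+γ)] + (1−r)γ. -/
open scoped Classical

namespace SixVertex

/-- A configuration of the six-vertex model on a rectangular lattice with `R` rows and
`C` columns of vertices: the first component gives the orientations of the horizontal
edges (`h r c` is the `c`-th horizontal edge in row `r`, rows numbered from the top;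
`true` means the arrow points to the right), the second component gives the orientations
of the vertical edges (`v r c` is the `r`-th vertical edge in column `c`, numbered from
the top; `true` means the arrow points up). Boundary half-edges are included. -/
abbrev Config (R C : ℕ) := (Fin R → Fin (C + 1) → Bool) × (Fin (R + 1) → Fin C → Bool)

/-- The type (1–6) of a vertex, determined by the orientations of its left, right,
bottom and top edges (`true` = rightwards for horizontal edges, `true` = upwards for
vertical edges). The value `0` means that the ice rule is violated at the vertex. -/
def vtype : Bool → Bool → Bool → Bool → ℕ
  | false, false, false, false => 1  -- horizontal left, vertical down
  | true,  true,  true,  true  => 2  -- horizontal right, vertical up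
  | true,  true,  false, false => 3  -- horizontal right, vertical down
  | false, false, true,  true  => 4  -- horizontal left, vertical up
  | false, true,  true,  false => 5  -- horizontal away, vertical toward
  | true,  false, false, true  => 6  -- horizontal toward, vertical away
  | _,     _,     _,     _     => 0

/-- The type of the vertex in row `r` (from the top) and column `c` of a configuration. -/
def vertexType {R C : ℕ} (σ : Config R C) (r : Fin R) (c : Fin C) : ℕ :=
  vtype (σ.1 r c.castSucc) (σ.1 r c.succ) (σ.2 r.succ c) (σ.2 r.castSucc c)

/-- The ice rule: at every vertex exactly two arrows point in and two point out,
i.e. every vertex is of one of the six admissible types. -/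
def IceRule {R C : ℕ} (σ : Config R C) : Prop :=
  ∀ r c, vertexType σ r c ≠ 0

/-- Partial domain wall boundary conditions: all arrows on the left and right boundaries
point out of the lattice, all arrows on the bottom boundary point in, and the top
boundary is free. -/
def PDWBC {R C : ℕ} (σ : Config R C) : Prop :=
  (∀ r : Fin R, σ.1 r 0 = false) ∧ (∀ r : Fin R, σ.1 r (Fin.last C) = true) ∧
    (∀ c : Fin C, σ.2 (Fin.last R) c = true)

/-- The number `N_i(σ)` of vertices of type `i` in the configuration `σ`. -/
def N {R C : ℕ} (σ : Config R C) (i : ℕ) : ℕ :=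
  (Finset.univ.filter (fun p : Fin R × Fin C => vertexType σ p.1 p.2 = i)).card

/-- The partition function of the six-vertex model with pDWBC on the lattice with `R`
rows and `C` columns, with weight `w i` for vertices of type `i+1`. -/
noncomputable def Z (R C : ℕ) (w : Fin 6 → ℝ) : ℝ :=
  ∑ σ ∈ Finset.univ.filter (fun σ : Config R C => IceRule σ ∧ PDWBC σ),
    ∏ i : Fin 6, w i ^ N σ (i.val + 1)

/-- The ferroelectric weights `(a₋, a₊, b₋, b₊, c, c)` with `a = sinh(t-γ)`,
`b = sinh(t+γ)`, `c = sinh(2γ)`, `a_± = e^{±γ}a`, `b_± = e^{±γ}b`. -/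
noncomputable def fw (t γ : ℝ) : Fin 6 → ℝ := fun i =>
  if i.val = 0 then Real.exp (-γ) * Real.sinh (t - γ)
  else if i.val = 1 then Real.exp γ * Real.sinh (t - γ)
  else if i.val = 2 then Real.exp (-γ) * Real.sinh (t + γ)
  else if i.val = 3 then Real.exp γ * Real.sinh (t + γ)
  else Real.sinh (2 * γ)

lemma sum_fin_cons {α : Type*} [Fintype α] (n : ℕ) (f : (Fin (n + 1) → α) → ℝ) :
    ∑ A, f A = ∑ x : α, ∑ A' : Fin n → α, f (Fin.cons x A') := by
  rw [← (Fin.consEquiv (fun _ : Fin (n + 1) => α)).sum_comp, Fintype.sum_prod_type]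
  rfl

lemma chain {α β : Type*} [Fintype α] [Fintype β] [DecidableEq β] (B : ℝ) (hB : 0 ≤ B)
    (y0 : β) (n : ℕ) (K : Fin n → α → β → β → ℝ) (h0 : ∀ i a x y, 0 ≤ K i a x y)
    (hK : ∀ i y, ∑ a, ∑ x, K i a x y ≤ B) :
    ∑ A : Fin n → α, ∑ V : Fin (n + 1) → β,
      (if V (Fin.last n) = y0 then ∏ i, K i (A i) (V i.castSucc) (V i.succ) else 0)
      ≤ B ^ n := by
  induction n with
  | zero =>
    simp only [sum_fin_cons]
    simp
  | succ n ih =>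
    rw [sum_fin_cons, Finset.sum_comm]
    have key : ∀ A' : Fin n → α, ∑ a : α, ∑ V : Fin (n + 1 + 1) → β,
        (if V (Fin.last (n + 1)) = y0 then
          ∏ i, K i ((Fin.cons a A' : Fin (n + 1) → α) i) (V i.castSucc) (V i.succ) else 0)
        ≤ B * ∑ V : Fin (n + 1) → β, (if V (Fin.last n) = y0 then
          ∏ i : Fin n, K i.succ (A' i) (V i.castSucc) (V i.succ) else 0) := by
      intro A'
      have e : ∀ a : α, ∑ V : Fin (n + 1 + 1) → β,
        (if V (Fin.last (n + 1)) = y0 then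
          ∏ i, K i ((Fin.cons a A' : Fin (n + 1) → α) i) (V i.castSucc) (V i.succ) else 0)
          = ∑ V : Fin (n + 1) → β, ∑ x : β, K 0 a x (V 0) * (if V (Fin.last n) = y0 then
          ∏ i : Fin n, K i.succ (A' i) (V i.castSucc) (V i.succ) else 0) := by
        intro a
        rw [sum_fin_cons, Finset.sum_comm]
        refine Finset.sum_congr rfl fun V _ => Finset.sum_congr rfl fun x _ => ?_
        rw [Fin.prod_univ_succ, ← Fin.succ_last]
        simp only [Fin.cons_succ, Fin.cons_zero, Fin.castSucc_zero, ← Fin.succ_castSucc]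
        split_ifs <;> simp
      simp only [e]
      rw [Finset.sum_comm, Finset.mul_sum]
      refine Finset.sum_le_sum fun V _ => ?_
      simp only [← Finset.sum_mul]
      refine mul_le_mul_of_nonneg_right (hK 0 _) ?_
      split_ifs
      · exact Finset.prod_nonneg fun i _ => h0 _ _ _ _
      · exact le_rfl
    calc _ ≤ _ := Finset.sum_le_sum fun A' _ => key A'
      _ = B * _ := by rw [← Finset.mul_sum]
      _ ≤ B * B ^ n := mul_le_mul_of_nonneg_left
          (ih (fun i => K i.succ) (fun i => h0 _) (fun i => hK _)) hB
      _ = B ^ (n + 1) := by ring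

/-- local vertex weight -/
noncomputable def om (w : Fin 6 → ℝ) (l r b t : Bool) : ℝ :=
  ∏ i : Fin 6, if vtype l r b t = i.val + 1 then w i else 1

lemma weight_eq {R C : ℕ} (w : Fin 6 → ℝ) (σ : Config R C) :
    ∏ i : Fin 6, w i ^ N σ (i.val + 1) = ∏ r : Fin R, ∏ c : Fin C,
      om w (σ.1 r c.castSucc) (σ.1 r c.succ) (σ.2 r.succ c) (σ.2 r.castSucc c) := by
  rw [← Fintype.prod_prod_type']
  unfold om
  rw [Finset.prod_comm]
  refine Finset.prod_congr rfl fun i _ => ?_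
  rw [Finset.prod_ite, Finset.prod_const, Finset.prod_const_one, mul_one]
  rfl

/-- field-free weights -/
noncomputable def fz (a b c : ℝ) : Fin 6 → ℝ := ![a, a, b, b, c, c]

/-- sign of an arrow -/
def sg (x : Bool) : ℝ := if x then 1 else -1

lemma om_fw (t γ : ℝ) (l r b u : Bool) (h : vtype l r b u ≠ 0) :
    om (fw t γ) l r b u = Real.exp (γ * ((sg b + sg u) / 2)) *
      om (fz (Real.sinh (t - γ)) (Real.sinh (t + γ)) (Real.sinh (2 * γ))) l r b u := by
  revert h
  cases l <;> cases r <;> cases b <;> cases u <;>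
    simp [vtype, om, fz, fw, sg, Fin.prod_univ_succ]

lemma sg_ice (l r b u : Bool) (h : vtype l r b u ≠ 0) : sg b - sg u = sg r - sg l := by
  revert h
  cases l <;> cases r <;> cases b <;> cases u <;> simp [vtype, sg]

lemma row_sum {R C : ℕ} (σ : Config R C) (h1 : IceRule σ) (h2 : PDWBC σ) :
    ∀ k : ℕ, ∀ hk : k ≤ R, ∑ c, sg (σ.2 ⟨R - k, by omega⟩ c) = (C : ℝ) - 2 * k := by
  intro k
  induction k with
  | zero =>
    intro _
    have : ∀ c, σ.2 ⟨R - 0, by omega⟩ c = true := h2.2.2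
    simp only [this, sg]
    simp
  | succ k ih =>
    intro hk
    have ih' := ih (by omega)
    let r : Fin R := ⟨R - (k + 1), by omega⟩
    have e1 : (⟨R - k, by omega⟩ : Fin (R + 1)) = r.succ := by
      ext; simp [r]; omega
    have e2 : (⟨R - (k + 1), by omega⟩ : Fin (R + 1)) = r.castSucc := rfl
    rw [e1] at ih'
    rw [e2]
    have tel : ∑ c : Fin C, (sg (σ.1 r c.succ) - sg (σ.1 r c.castSucc)) = 2 := by
      have hs := Fin.sum_univ_succ (fun c => sg (σ.1 r c))
      have hc := Fin.sum_univ_castSucc (fun c => sg (σ.1 r c))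
      rw [Finset.sum_sub_distrib]
      have hl : sg (σ.1 r 0) = -1 := by simp [h2.1 r, sg]
      have hr : sg (σ.1 r (Fin.last C)) = 1 := by simp [h2.2.1 r, sg]
      linarith
    have : ∑ c : Fin C, (sg (σ.2 r.succ c) - sg (σ.2 r.castSucc c)) = 2 := by
      rw [← tel]
      exact Finset.sum_congr rfl fun c _ => sg_ice _ _ _ _ (h1 r c)
    rw [Finset.sum_sub_distrib] at this
    push_cast
    linarith

lemma sum_aux (R : ℕ) (C : ℝ) : ∑ r : Fin R, (C - 2 * ((R : ℝ) - r) + 1) = R * (C - R) := by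
  rw [Fin.sum_univ_eq_sum_range (fun r => C - 2 * ((R : ℝ) - r) + 1) R]
  have h : ∀ (D : ℝ) (k : ℕ), ∑ r ∈ Finset.range k, (C - 2 * (D - r) + 1)
      = k * (C - 2 * D) + k * k := by
    intro D k
    induction k with
    | zero => simp
    | succ k ih => rw [Finset.sum_range_succ, ih]; push_cast; ring
  rw [h]; ring

lemma total_sum {R C : ℕ} (σ : Config R C) (h1 : IceRule σ) (h2 : PDWBC σ) :
    ∑ r : Fin R, ∑ c : Fin C, ((sg (σ.2 r.succ c) + sg (σ.2 r.castSucc c)) / 2)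
      = R * ((C : ℝ) - R) := by
  rw [← sum_aux]
  refine Finset.sum_congr rfl fun r _ => ?_
  have hr := r.2
  have a1 := row_sum σ h1 h2 (R - r) (by omega)
  have a2 := row_sum σ h1 h2 (R - (r + 1)) (by omega)
  have e1 : (⟨R - (R - r), by omega⟩ : Fin (R + 1)) = r.castSucc := by
    ext; simp; omega
  have e2 : (⟨R - (R - (r + 1)), by omega⟩ : Fin (R + 1)) = r.succ := by
    ext; simp; omega
  rw [e1, Nat.cast_sub (by omega)] at a1
  rw [e2, Nat.cast_sub (by omega)] at a2
  push_cast at a2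
  rw [← Finset.sum_div, Finset.sum_add_distrib, a1, a2]
  ring

lemma Z_fw (R C : ℕ) (t γ : ℝ) : Z R C (fw t γ) = Real.exp (γ * (R * ((C : ℝ) - R))) *
    Z R C (fz (Real.sinh (t - γ)) (Real.sinh (t + γ)) (Real.sinh (2 * γ))) := by
  unfold Z
  rw [Finset.mul_sum]
  refine Finset.sum_congr rfl fun σ hσ => ?_
  obtain ⟨h1, h2⟩ := (Finset.mem_filter.1 hσ).2
  rw [weight_eq, weight_eq, ← total_sum σ h1 h2, Finset.mul_sum, Real.exp_sum,
    ← Finset.prod_mul_distrib]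
  refine Finset.prod_congr rfl fun r _ => ?_
  rw [Finset.mul_sum, Real.exp_sum, ← Finset.prod_mul_distrib]
  exact Finset.prod_congr rfl fun c _ => om_fw _ _ _ _ _ _ (h1 r c)

/-- local weight, zero when the ice rule fails -/
noncomputable def kw (a b c : ℝ) (l r bt tp : Bool) : ℝ :=
  if vtype l r bt tp = 0 then 0 else om (fz a b c) l r bt tp

lemma om_nonneg (a b c : ℝ) (ha : 0 ≤ a) (hb : 0 ≤ b) (hc : 0 ≤ c) (l r bt tp : Bool) :
    0 ≤ om (fz a b c) l r bt tp := by
  cases l <;> cases r <;> cases bt <;> cases tp <;>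
    simp [vtype, om, fz, Fin.prod_univ_succ, *]

lemma kw_nonneg (a b c : ℝ) (ha : 0 ≤ a) (hb : 0 ≤ b) (hc : 0 ≤ c) (l r bt tp : Bool) :
    0 ≤ kw a b c l r bt tp := by
  unfold kw
  split_ifs
  · exact le_rfl
  · exact om_nonneg a b c ha hb hc _ _ _ _

lemma kw_sum (a b c : ℝ) (h : a + c ≤ b) (r bt : Bool) :
    ∑ tp, ∑ l, kw a b c l r bt tp ≤ b := by
  cases r <;> cases bt <;>
    simp [vtype, kw, om, fz, Fin.prod_univ_succ] <;> linarith

lemma Z_upper (R C : ℕ) (a b c : ℝ) (ha : 0 ≤ a) (hb : 0 ≤ b) (hc : 0 ≤ c) (h : a + c ≤ b) :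
    Z R C (fz a b c) ≤ (b ^ C) ^ R := by
  have hrow : ∀ y : Fin C → Bool, ∑ g : Fin (C + 1) → Bool, ∑ x : Fin C → Bool,
      (if g (Fin.last C) = true then
        ∏ j : Fin C, kw a b c (g j.castSucc) (g j.succ) (y j) (x j) else 0) ≤ b ^ C := by
    intro y
    rw [Finset.sum_comm]
    exact chain b hb true C (fun j tp l r => kw a b c l r (y j) tp)
      (fun _ _ _ _ => kw_nonneg a b c ha hb hc _ _ _ _) (fun j r => kw_sum a b c h r (y j))
  have hmain := chain (b ^ C) (by positivity) (fun _ => true) R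
    (fun (_ : Fin R) (g : Fin (C + 1) → Bool) (x y : Fin C → Bool) =>
      if g (Fin.last C) = true then
        ∏ j : Fin C, kw a b c (g j.castSucc) (g j.succ) (y j) (x j) else 0)
    (fun _ _ _ _ => by
      split_ifs
      · exact Finset.prod_nonneg fun _ _ => kw_nonneg a b c ha hb hc _ _ _ _
      · exact le_rfl) (fun _ => hrow)
  refine le_trans ?_ hmain
  rw [← Fintype.sum_prod_type']
  unfold Z
  rw [Finset.sum_filter]
  refine Finset.sum_le_sum fun σ _ => ?_
  by_cases hσ : IceRule σ ∧ PDWBC σ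
  · obtain ⟨h1, h2⟩ := hσ
    rw [if_pos ⟨h1, h2⟩, if_pos (funext h2.2.2), weight_eq]
    refine le_of_eq (Finset.prod_congr rfl fun r _ => ?_)
    rw [if_pos (h2.2.1 r)]
    refine Finset.prod_congr rfl fun j _ => ?_
    unfold kw
    exact (if_neg (h1 r j)).symm
  · rw [if_neg hσ]
    split_ifs
    · refine Finset.prod_nonneg fun r _ => ?_
      split_ifs
      · exact Finset.prod_nonneg fun _ _ => kw_nonneg a b c ha hb hc _ _ _ _
      · exact le_rfl
    · exact le_rfl

/-- the ground state -/
def gs (R C : ℕ) : Config R C :=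
  (fun r j => decide (C - R + r.val < j.val), fun r j => decide (j.val < C - R + r.val))

lemma gs_type (R C : ℕ) (r : Fin R) (j : Fin C) :
    vertexType (gs R C) r j = if j.val < C - R + r.val then 4
      else if j.val = C - R + r.val then 5 else 3 := by
  unfold vertexType gs
  simp only [Fin.val_castSucc, Fin.val_succ]
  rcases lt_trichotomy j.val (C - R + r.val) with h | h | h
  · rw [if_pos h, decide_eq_false (by omega), decide_eq_false (by omega),
      decide_eq_true (by omega), decide_eq_true (by omega)]; rfl
  · rw [if_neg (by omega), if_pos h, decide_eq_false (by omega), decide_eq_true (by omega),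
      decide_eq_true (by omega), decide_eq_false (by omega)]; rfl
  · rw [if_neg (by omega), if_neg (by omega), decide_eq_true (by omega), decide_eq_true (by omega),
      decide_eq_false (by omega), decide_eq_false (by omega)]; rfl

lemma Z_lower (R C : ℕ) (hRC : R ≤ C) (a b c : ℝ) (ha : 0 ≤ a) (hb : 0 ≤ b) (hc : 0 ≤ c) :
    (c * b ^ (C - 1)) ^ R ≤ Z R C (fz a b c) := by
  have hmem : gs R C ∈ Finset.univ.filter (fun σ : Config R C => IceRule σ ∧ PDWBC σ) := by
    rw [Finset.mem_filter]
    refine ⟨Finset.mem_univ _, fun r j => ?_, fun r => ?_, fun r => ?_, fun j => ?_⟩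
    · rw [gs_type]; split_ifs <;> norm_num
    · simp [gs]
    · have := r.2
      simp [gs]; omega
    · have := j.2
      simp [gs]; omega
  unfold Z
  refine le_trans (le_of_eq ?_) (Finset.single_le_sum
    (f := fun σ : Config R C => ∏ i : Fin 6, fz a b c i ^ N σ (i.val + 1)) (fun σ _ => ?_) hmem)
  · rw [weight_eq, ← Fin.prod_const]
    refine Finset.prod_congr rfl fun r _ => ?_
    have hr := r.2
    have hloc : ∀ j : Fin C, om (fz a b c) ((gs R C).1 r j.castSucc) ((gs R C).1 r j.succ)
        ((gs R C).2 r.succ j) ((gs R C).2 r.castSucc j)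
        = if j = (⟨C - R + r.val, by omega⟩ : Fin C) then c else b := by
      intro j
      have ht := gs_type R C r j
      unfold vertexType at ht
      unfold om
      rw [ht]
      simp only [Fin.ext_iff]
      rcases lt_trichotomy j.val (C - R + r.val) with h | h | h
      · simp [h, h.ne, fz, Fin.prod_univ_succ]
      · simp [h, fz, Fin.prod_univ_succ]
      · simp [h.not_gt, h.ne', fz, Fin.prod_univ_succ]
    rw [Finset.prod_congr rfl fun j _ => hloc j, ← Finset.mul_prod_erase _ _ (Finset.mem_univ
      (⟨C - R + r.val, by omega⟩ : Fin C)), if_pos rfl]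
    congr 1
    rw [Finset.prod_congr rfl (g := fun _ => b), Finset.prod_const, Finset.card_erase_of_mem
      (Finset.mem_univ _)]
    · simp
    · intro j hj
      rw [if_neg (Finset.ne_of_mem_erase hj)]
  · rw [weight_eq]
    exact Finset.prod_nonneg fun _ _ => Finset.prod_nonneg fun _ _ =>
      om_nonneg a b c ha hb hc _ _ _ _

lemma sinh_super (x y : ℝ) (hx : 0 ≤ x) (hy : 0 ≤ y) :
    Real.sinh x + Real.sinh y ≤ Real.sinh (x + y) := by
  rw [Real.sinh_add]
  have h1 := Real.one_le_cosh x
  have h2 := Real.one_le_cosh y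
  have h3 := Real.sinh_nonneg_iff.2 hx
  have h4 := Real.sinh_nonneg_iff.2 hy
  nlinarith

/-- The free energy per site of the pDWBC six-vertex model in the ferroelectric phase:
if `(n - m(n))/n → r` with `0 < r ≤ 1`, then
`(1/((n-m)n)) ln Z_{n-m,n} → ln sinh(t+γ) + (1-r)γ`. -/
theorem Z_free_energy (t γ r : ℝ) (hγ : 0 < γ) (htγ : γ < t) (hr0 : 0 < r) (hr1 : r ≤ 1)
    (m : ℕ → ℕ) (hm : ∀ n : ℕ, 1 ≤ n → m n < n)
    (hratio : Filter.Tendsto (fun n : ℕ => ((n - m n : ℕ) : ℝ) / (n : ℝ))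
      Filter.atTop (nhds r)) :
    Filter.Tendsto
      (fun n : ℕ => Real.log (Z (n - m n) n (fw t γ)) / (((n - m n : ℕ) : ℝ) * (n : ℝ)))
      Filter.atTop (nhds (Real.log (Real.sinh (t + γ)) + (1 - r) * γ)) := by
  set a := Real.sinh (t - γ) with ha_def
  set b := Real.sinh (t + γ) with hb_def
  set c := Real.sinh (2 * γ) with hc_def
  have ha : 0 < a := Real.sinh_pos_iff.2 (by linarith)
  have hb : 0 < b := Real.sinh_pos_iff.2 (by linarith)
  have hc : 0 < c := Real.sinh_pos_iff.2 (by linarith)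
  have hab : a + c ≤ b := by
    have := sinh_super (t - γ) (2 * γ) (by linarith) (by linarith)
    rwa [show t - γ + 2 * γ = t + γ by ring] at this
  have hfield : Filter.Tendsto (fun n : ℕ => (1 - ((n - m n : ℕ) : ℝ) / (n : ℝ)) * γ)
      Filter.atTop (nhds ((1 - r) * γ)) := (hratio.const_sub 1).mul_const γ
  have hlow : Filter.Tendsto (fun n : ℕ => (Real.log c - Real.log b) / (n : ℝ) + Real.log b)
      Filter.atTop (nhds (Real.log b)) := by
    simpa using (tendsto_const_div_atTop_nhds_zero_nat (Real.log c - Real.log b)).add_const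
      (Real.log b)
  have hkey : ∀ n : ℕ, 1 ≤ n →
      (Real.log c - Real.log b) / (n : ℝ) + Real.log b
        + (1 - ((n - m n : ℕ) : ℝ) / (n : ℝ)) * γ
        ≤ Real.log (Z (n - m n) n (fw t γ)) / (((n - m n : ℕ) : ℝ) * (n : ℝ)) ∧
      Real.log (Z (n - m n) n (fw t γ)) / (((n - m n : ℕ) : ℝ) * (n : ℝ)) ≤
        Real.log b + (1 - ((n - m n : ℕ) : ℝ) / (n : ℝ)) * γ := by
    intro n hn
    have hmn := hm n hn
    have hR1 : 1 ≤ n - m n := by omega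
    have hRn : n - m n ≤ n := by omega
    generalize n - m n = R at hR1 hRn
    have hl := Z_lower R n hRn a b c ha.le hb.le hc.le
    have hu := Z_upper R n a b c ha.le hb.le hc.le hab
    have hpos : 0 < (c * b ^ (n - 1)) ^ R := by positivity
    have hZ : 0 < Z R n (fz a b c) := hpos.trans_le hl
    have hl' := Real.log_le_log hpos hl
    have hu' := Real.log_le_log hZ hu
    rw [Real.log_pow, Real.log_mul hc.ne' (by positivity), Real.log_pow,
      Nat.cast_sub hn, Nat.cast_one] at hl'
    rw [Real.log_pow, Real.log_pow] at hu'
    have hRp : (0 : ℝ) < R := by exact_mod_cast hR1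
    have hnp : (0 : ℝ) < n := by exact_mod_cast hn
    rw [Z_fw, Real.log_mul (Real.exp_pos _).ne' hZ.ne', Real.log_exp]
    constructor
    · rw [le_div_iff₀ (by positivity)]
      have : ((Real.log c - Real.log b) / (n : ℝ) + Real.log b + (1 - (R : ℝ) / n) * γ)
          * (R * n) = γ * (R * ((n : ℝ) - R)) + R * (Real.log c + (n - 1) * Real.log b) := by
        field_simp
        ring
      linarith
    · rw [div_le_iff₀ (by positivity)]
      have : (Real.log b + (1 - (R : ℝ) / n) * γ)
          * (R * n) = γ * (R * ((n : ℝ) - R)) + R * (n * Real.log b) := by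
        field_simp
        ring
      linarith
  refine tendsto_of_tendsto_of_tendsto_of_le_of_le' (hlow.add hfield)
    (hfield.const_add (Real.log b)) ?_ ?_
  · filter_upwards [Filter.eventually_ge_atTop 1] with n hn using (hkey n hn).1
  · filter_upwards [Filter.eventually_ge_atTop 1] with n hn using (hkey n hn).2

end SixVertex
end

section
/- Let τ_{n−m,n} be the determinant of the n×n matrix whose i-th row for 1 ≤ i ≤ m has entries (−2i)^{k−1}, k = 1,…,n, and whose (m+i)-th row for 1 ≤ i ≤ n−m has entries φ^{(i+k−2)}(t), k = 1,…,n, where φ(λ) = sinh(2γ)/(sinh(λ−γ)sinh(λ+γ)). Then τ_{n−m,n} = (−1)^{m(m+1)/2 − nm} · 2^{n(n−m)+m(m−1)/2} · (∏_{j=0}^{m−1} j!) · (1/(n−m)!) · Σ_{x₁,…,x_{n−m}=0}^{∞} Δ(x)² ∏_{j=1}^{n−m} w(x_j), where Δ(x) = ∏_{1≤j<k≤n−m}(x_k − x_j) is the Vandermonde determinant and the (absolutely convergent) sum runs over all tuples of nonnegative integers. -/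
open scoped Classical

namespace SixVertex

/-- The function `φ(λ) = sinh(2γ)/(sinh(λ-γ) sinh(λ+γ))`. -/
noncomputable def phi (γ : ℝ) : ℝ → ℝ := fun lam =>
  Real.sinh (2 * γ) / (Real.sinh (lam - γ) * Real.sinh (lam + γ))

/-- The discrete weight `w(x) = (e^{-2(t-γ)(x+m+1)} - e^{-2(t+γ)(x+m+1)}) ∏_{k=1}^m (x+k)`
on the nonnegative integers. -/
noncomputable def wfun (t γ : ℝ) (m : ℕ) (x : ℕ) : ℝ :=
  (Real.exp (-2 * (t - γ) * ((x : ℝ) + m + 1)) - Real.exp (-2 * (t + γ) * ((x : ℝ) + m + 1)))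
    * ∏ k ∈ Finset.Icc 1 m, ((x : ℝ) + k)

/-- The Meixner weight `w^M(x) = e^{-2(t-γ)(x+m+1)} ∏_{k=1}^m (x+k)` on the
nonnegative integers. -/
noncomputable def wM (t γ : ℝ) (m : ℕ) (x : ℕ) : ℝ :=
  Real.exp (-2 * (t - γ) * ((x : ℝ) + m + 1)) * ∏ k ∈ Finset.Icc 1 m, ((x : ℝ) + k)

lemma smul_aux {ι κ : Type} (f : ι → ℝ) (g : κ → ℝ) (hf : Summable f) (hg : Summable g) :
    Summable (fun p : ι × κ => f p.1 * g p.2) := by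
  have h1 : Summable fun x => ‖f x‖ := hf.norm
  have h2 : Summable fun x => ‖g x‖ := hg.norm
  exact summable_mul_of_summable_norm h1 h2

lemma mul_hs {ι κ : Type} (f : ι → ℝ) (g : κ → ℝ) (a b : ℝ) (hf : HasSum f a)
    (hg : HasSum g b) : HasSum (fun p : ι × κ => f p.1 * g p.2) (a * b) :=
  hf.mul hg (smul_aux f g hf.summable hg.summable)

/-- Product of finitely many absolutely convergent real series. -/
lemma hasSum_pi_prod (N : ℕ) (f : Fin N → ℕ → ℝ) (a : Fin N → ℝ)
    (h : ∀ j, HasSum (f j) (a j)) :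
    HasSum (fun x : Fin N → ℕ => ∏ j, f j (x j)) (∏ j, a j) := by
  induction N with
  | zero => simp
  | succ N ih =>
    have h1 : HasSum (fun y : Fin N → ℕ => ∏ j, f (Fin.succ j) (y j)) (∏ j, a (Fin.succ j)) :=
      ih (fun j => f j.succ) (fun j => a j.succ) (fun j => h j.succ)
    have h2 := mul_hs _ _ _ _ (h 0) h1
    rw [← (Fin.consEquiv (fun _ : Fin (N + 1) => ℕ)).hasSum_iff]
    rw [Fin.prod_univ_succ]
    have e : ((fun x : Fin (N + 1) → ℕ => ∏ j, f j (x j)) ∘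
        (Fin.consEquiv (fun _ : Fin (N + 1) => ℕ))) =
        fun p : ℕ × (Fin N → ℕ) => f 0 p.1 * ∏ j, f (Fin.succ j) (p.2 j) := by
      funext x
      simp [Fin.prod_univ_succ, Fin.consEquiv]
    rw [e]
    exact h2

/-- The exponential factor. -/
noncomputable def vv (t γ y : ℝ) : ℝ :=
  Real.exp (-2 * (t - γ) * y) - Real.exp (-2 * (t + γ) * y)

lemma summable_aux (j : ℕ) (c : ℝ) (hc : 0 < c) :
    Summable (fun x : ℕ => 2 * (2 * ((x : ℝ) + 1)) ^ j * Real.exp (-2 * c * ((x : ℝ) + 1))) := by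
  have h : ‖Real.exp (-2 * c)‖ < 1 := by
    rw [Real.norm_eq_abs, abs_of_pos (Real.exp_pos _), Real.exp_lt_one_iff]
    linarith
  have h0 : Summable (fun n : ℕ => (n : ℝ) ^ j * Real.exp (-2 * c) ^ n) := summable_pow_mul_geometric_of_norm_lt_one j h
  have h1 := (summable_nat_add_iff 1).2 h0
  have h2 := h1.mul_left (2 * 2 ^ j)
  have e : (fun x : ℕ => 2 * (2 * ((x : ℝ) + 1)) ^ j * Real.exp (-2 * c * ((x : ℝ) + 1))) = fun x : ℕ =>  2 * 2 ^ j * (((x + 1 : ℕ) : ℝ) ^ j * Real.exp (-2 * c) ^ (x+1)) := by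
    funext x
    rw [← Real.exp_nat_mul, mul_pow]
    push_cast
    rw [show -2 * c * ((x : ℝ) + 1) = ((x : ℝ) + 1) * (-2 * c) by ring]
    ring
  rw [e]
  exact h2

lemma bound_aux (j : ℕ) (γ c s : ℝ) (hγ : 0 < γ) (hs : c < s) (x : ℕ) :
    ‖2 * (-2 * ((x : ℝ) + 1)) ^ j * vv s γ ((x : ℝ) + 1)‖ ≤
      2 * (2 * ((x : ℝ) + 1)) ^ j * Real.exp (-2 * (c - γ) * ((x : ℝ) + 1)) := by
  have hx : (0 : ℝ) < (x : ℝ) + 1 := by positivity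
  have h1 : |vv s γ ((x : ℝ) + 1)| ≤ Real.exp (-2 * (c - γ) * ((x : ℝ) + 1)) := by
    have e1 : Real.exp (-2 * (s + γ) * ((x : ℝ) + 1)) ≤ Real.exp (-2 * (s - γ) * ((x : ℝ) + 1)) := by
      apply Real.exp_le_exp.2; nlinarith
    have e2 : Real.exp (-2 * (s - γ) * ((x : ℝ) + 1)) ≤ Real.exp (-2 * (c - γ) * ((x : ℝ) + 1)) := by
      apply Real.exp_le_exp.2; nlinarith
    have e3 := Real.exp_pos (-2 * (s + γ) * ((x : ℝ) + 1))
    unfold vv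
    rw [abs_of_nonneg (by linarith)]
    linarith
  rw [norm_mul, norm_mul, norm_pow, norm_mul]
  simp only [Real.norm_eq_abs, abs_neg, abs_two, abs_of_pos hx]
  gcongr

lemma summable_u (j : ℕ) (γ s : ℝ) (hγ : 0 < γ) (hs : γ < s) :
    Summable (fun x : ℕ => 2 * (-2 * ((x : ℝ) + 1)) ^ j * vv s γ ((x : ℝ) + 1)) :=
  Summable.of_norm_bounded (summable_aux j ((γ + s) / 2 - γ) (by linarith))
    (fun x => bound_aux j γ ((γ + s) / 2) s hγ (by linarith) x)

lemma coth_sum (a : ℝ) (ha : 0 < a) :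
    HasSum (fun x : ℕ => Real.exp (-2 * a * ((x : ℝ) + 1)))
      (Real.exp (-2 * a) / (1 - Real.exp (-2 * a))) := by
  have h1 : Real.exp (-2 * a) < 1 := by rw [Real.exp_lt_one_iff]; linarith
  have h := (hasSum_geometric_of_lt_one (Real.exp_pos _).le h1).mul_left (Real.exp (-2 * a))
  have e : (fun x : ℕ => Real.exp (-2 * a * ((x : ℝ) + 1))) =
      fun x : ℕ => Real.exp (-2 * a) * Real.exp (-2 * a) ^ x := by
    funext x
    rw [← Real.exp_nat_mul, ← Real.exp_add]
    congr 1; ring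
  rw [e, div_eq_mul_inv]
  exact h

lemma phi_eq (γ s : ℝ) (hγ : 0 < γ) (hs : γ < s) :
    phi γ s = ∑' x : ℕ, 2 * (-2 * ((x : ℝ) + 1)) ^ 0 * vv s γ ((x : ℝ) + 1) := by
  have h := ((coth_sum (s - γ) (by linarith)).sub (coth_sum (s + γ) (by linarith))).mul_left 2
  have h' : (∑' x : ℕ, 2 * (-2 * ((x : ℝ) + 1)) ^ 0 * vv s γ ((x : ℝ) + 1)) =
      2 * (Real.exp (-2 * (s - γ)) / (1 - Real.exp (-2 * (s - γ))) -
        Real.exp (-2 * (s + γ)) / (1 - Real.exp (-2 * (s + γ)))) := by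
    rw [← h.tsum_eq]
    apply tsum_congr
    intro x
    simp [vv]
  rw [h']
  have hA : Real.exp (-2 * (s - γ)) < 1 := by rw [Real.exp_lt_one_iff]; linarith
  have hB : Real.exp (-2 * (s + γ)) < 1 := by rw [Real.exp_lt_one_iff]; linarith
  unfold phi
  rw [Real.sinh_eq, Real.sinh_eq, Real.sinh_eq]
  have p1 : Real.exp (-2 * (s - γ)) = (Real.exp s)⁻¹ ^ 2 * Real.exp γ ^ 2 := by
    rw [← Real.exp_neg, ← Real.exp_nat_mul, ← Real.exp_nat_mul, ← Real.exp_add]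
    congr 1; push_cast; ring
  have p2 : Real.exp (-2 * (s + γ)) = (Real.exp s)⁻¹ ^ 2 * (Real.exp γ)⁻¹ ^ 2 := by
    rw [← Real.exp_neg, ← Real.exp_neg, ← Real.exp_nat_mul, ← Real.exp_nat_mul, ← Real.exp_add]
    congr 1; push_cast; ring
  rw [p1] at hA
  rw [p2] at hB
  rw [p1, p2]
  have p3 : Real.exp (2 * γ) = Real.exp γ ^ 2 := by
    rw [← Real.exp_nat_mul]; congr 1
  have p4 : Real.exp (-(2 * γ)) = (Real.exp γ)⁻¹ ^ 2 := by
    rw [← Real.exp_neg, ← Real.exp_nat_mul]; congr 1; push_cast; ring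
  have p5 : Real.exp (s - γ) = Real.exp s * (Real.exp γ)⁻¹ := by
    rw [← Real.exp_neg, ← Real.exp_add]; rfl
  have p6 : Real.exp (-(s - γ)) = (Real.exp s)⁻¹ * (Real.exp γ) := by
    rw [← Real.exp_neg, ← Real.exp_add]; congr 1; ring
  have p7 : Real.exp (s + γ) = Real.exp s * (Real.exp γ) := by
    rw [← Real.exp_add]
  have p8 : Real.exp (-(s + γ)) = (Real.exp s)⁻¹ * (Real.exp γ)⁻¹ := by
    rw [← Real.exp_neg, ← Real.exp_neg, ← Real.exp_add]; congr 1; ring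
  rw [p3, p4, p5, p6, p7, p8]
  have hE := Real.exp_pos s
  have hG := Real.exp_pos γ
  generalize Real.exp s = E at *
  generalize Real.exp γ = G at *
  have hA' : E ^ 2 - G ^ 2 ≠ 0 := by
    intro h0
    have : E⁻¹ ^ 2 * G ^ 2 = 1 := by
      rw [show G ^ 2 = E ^ 2 by linarith]; field_simp
    linarith
  have hB' : E ^ 2 * G ^ 2 - 1 ≠ 0 := by
    intro h0
    have : E⁻¹ ^ 2 * G⁻¹ ^ 2 = 1 := by
      rw [inv_pow, inv_pow, ← mul_inv, show E ^ 2 * G ^ 2 = 1 by linarith, inv_one]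
    linarith
  have q1 : 1 - E⁻¹ ^ 2 * G ^ 2 = (E ^ 2 - G ^ 2) / E ^ 2 := by field_simp
  have q2 : 1 - E⁻¹ ^ 2 * G⁻¹ ^ 2 = (E ^ 2 * G ^ 2 - 1) / (E ^ 2 * G ^ 2) := by field_simp
  have q3 : (E * G⁻¹ - E⁻¹ * G) / 2 = (E ^ 2 - G ^ 2) / (2 * E * G) := by field_simp
  have q4 : (E * G - E⁻¹ * G⁻¹) / 2 = (E ^ 2 * G ^ 2 - 1) / (2 * E * G) := by field_simp
  rw [q1, q2, q3, q4]
  have e1 : E⁻¹ ^ 2 * G ^ 2 / ((E ^ 2 - G ^ 2) / E ^ 2) = G ^ 2 / (E ^ 2 - G ^ 2) := by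
    field_simp
  have e2 : E⁻¹ ^ 2 * G⁻¹ ^ 2 / ((E ^ 2 * G ^ 2 - 1) / (E ^ 2 * G ^ 2)) = 1 / (E ^ 2 * G ^ 2 - 1) := by
    field_simp
  rw [e1, e2, div_sub_div _ _ hA' hB']
  generalize hP : E ^ 2 - G ^ 2 = P at *
  generalize hQ : E ^ 2 * G ^ 2 - 1 = Q at *
  field_simp
  rw [← hP, ← hQ]
  ring

lemma iter_phi (γ : ℝ) (hγ : 0 < γ) (j : ℕ) : ∀ s : ℝ, γ < s →
    iteratedDeriv j (phi γ) s =
      ∑' x : ℕ, 2 * (-2 * ((x : ℝ) + 1)) ^ j * vv s γ ((x : ℝ) + 1) := by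
  induction j with
  | zero => intro s hs; rw [iteratedDeriv_zero]; exact phi_eq γ s hγ hs
  | succ j ih =>
    intro s hs
    rw [iteratedDeriv_succ]
    have heq : iteratedDeriv j (phi γ) =ᶠ[nhds s]
        fun z => ∑' x : ℕ, 2 * (-2 * ((x : ℝ) + 1)) ^ j * vv z γ ((x : ℝ) + 1) := by
      filter_upwards [Ioi_mem_nhds hs] with z hz using ih z hz
    rw [heq.deriv_eq]
    apply HasDerivAt.deriv
    have hmem : s ∈ Set.Ioi ((γ + s) / 2) := by simp only [Set.mem_Ioi]; linarith
    refine hasDerivAt_tsum_of_isPreconnected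
      (summable_aux (j + 1) ((γ + s) / 2 - γ) (by linarith)) isOpen_Ioi isPreconnected_Ioi
      ?_ (fun x y hy => bound_aux (j + 1) γ ((γ + s) / 2) y hγ hy x) hmem
      (summable_u j γ s hγ hs) hmem
    intro x y _
    unfold vv
    have e1 : HasDerivAt (fun z : ℝ => -2 * (z - γ) * ((x : ℝ) + 1)) (-2 * 1 * ((x : ℝ) + 1)) y :=
      (((hasDerivAt_id y).sub_const γ).const_mul (-2)).mul_const _
    have e2 : HasDerivAt (fun z : ℝ => -2 * (z + γ) * ((x : ℝ) + 1)) (-2 * 1 * ((x : ℝ) + 1)) y :=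
      (((hasDerivAt_id y).add_const γ).const_mul (-2)).mul_const _
    refine ((e1.exp.sub e2.exp).const_mul (2 * (-2 * ((x : ℝ) + 1)) ^ j)).congr_deriv ?_
    ring

lemma hasSum_phi (γ t : ℝ) (hγ : 0 < γ) (ht : γ < t) (j : ℕ) :
    HasSum (fun x : ℕ => 2 * (-2 * ((x : ℝ) + 1)) ^ j * vv t γ ((x : ℝ) + 1))
      (iteratedDeriv j (phi γ) t) := by
  rw [iter_phi γ hγ j t ht]
  exact (summable_u j γ t hγ ht).hasSum

lemma vand_scale (n : ℕ) (c : ℝ) (v : Fin n → ℝ) :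
    (Matrix.vandermonde (fun i => c * v i)).det =
      c ^ (n * (n - 1) / 2) * (Matrix.vandermonde v).det := by
  have h : Matrix.vandermonde (fun i => c * v i) =
      Matrix.of fun i j : Fin n => c ^ (j : ℕ) * Matrix.vandermonde v i j := by
    ext i j
    simp [Matrix.vandermonde_apply, mul_pow]
  rw [h, Matrix.det_mul_row, Finset.prod_pow_eq_pow_sum,
    Fin.sum_univ_eq_sum_range (fun i => i), Finset.sum_range_id]

lemma vand_ite (n : ℕ) (v : Fin n → ℝ) :
    (Matrix.vandermonde v).det = ∏ i, ∏ j, if i < j then v j - v i else 1 := by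
  rw [Matrix.det_vandermonde]
  refine Finset.prod_congr rfl fun i _ => ?_
  rw [← Finset.prod_filter]
  refine Finset.prod_congr ?_ fun _ _ => rfl
  ext j; simp

lemma vand_append (m N : ℕ) (a : Fin m → ℝ) (b : Fin N → ℝ) :
    (Matrix.vandermonde (Fin.append a b)).det =
      (Matrix.vandermonde a).det * (Matrix.vandermonde b).det * ∏ j, ∏ i, (b j - a i) := by
  have hlt : ∀ (i : Fin m) (j : Fin N), Fin.castAdd N i < Fin.natAdd m j := by
    intro i j; rw [Fin.lt_def]; simp; omega
  have hcc : ∀ (i j : Fin m), Fin.castAdd N i < Fin.castAdd N j ↔ i < j := by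
    intro i j; exact Iff.rfl
  rw [vand_ite, vand_ite, vand_ite, Fin.prod_univ_add]
  simp only [Fin.prod_univ_add, Fin.append_left, Fin.append_right]
  simp only [hlt, if_true, (hlt _ _).not_gt, if_false, Finset.prod_const_one, one_mul,
    Finset.prod_mul_distrib, Fin.natAdd_lt_natAdd_iff, hcc]
  rw [Finset.prod_comm (f := fun (i : Fin m) (j : Fin N) => b j - a i)]
  ring

lemma vand_first (m : ℕ) :
    (Matrix.vandermonde (fun i : Fin m => ((i : ℕ) : ℝ) + 1)).det =
      ∏ j ∈ Finset.range m, (j.factorial : ℝ) := by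
  rw [Matrix.det_vandermonde_add]
  cases m with
  | zero => simp
  | succ m =>
    rw [Matrix.det_vandermonde_id_eq_superFactorial, ← Nat.prod_range_succ_factorial]
    push_cast; rfl

/-- Summand after expanding the determinant. -/
noncomputable def summand (t γ : ℝ) (m N : ℕ) (x : Fin N → ℕ) : ℝ :=
  (∏ j : Fin N, (2 * (-2 * ((x j : ℝ) + 1)) ^ (j : ℕ) * vv t γ ((x j : ℝ) + 1))) *
    ((-2) ^ ((m + N) * (m + N - 1) / 2) * ((∏ j ∈ Finset.range m, (j.factorial : ℝ)) *
      (Matrix.vandermonde (fun j => (x j : ℝ) + 1)).det *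
        ∏ j : Fin N, ∏ i : Fin m, (((x j : ℝ) + 1) - (((i : ℕ) : ℝ) + 1))))

lemma hasSum_det (t γ : ℝ) (hγ : 0 < γ) (ht : γ < t) (m N : ℕ) :
    HasSum (summand t γ m N)
      (Matrix.of fun i k : Fin (m + N) =>
        if i.val < m then (-2 * ((i.val : ℝ) + 1)) ^ k.val
        else iteratedDeriv (i.val - m + k.val) (phi γ) t).det := by
  rw [← Matrix.det_transpose, Matrix.det_apply]
  have key : ∀ σ : Equiv.Perm (Fin (m + N)), HasSum (fun x : Fin N → ℕ =>
      Equiv.Perm.sign σ • ((∏ i : Fin m, (-2 * (((i : ℕ) : ℝ) + 1)) ^ (σ (Fin.castAdd N i)).val) *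
        ∏ j : Fin N, (2 * (-2 * ((x j : ℝ) + 1)) ^ ((j : ℕ) + (σ (Fin.natAdd m j)).val) *
          vv t γ ((x j : ℝ) + 1))))
      (Equiv.Perm.sign σ • ((∏ i : Fin m, (-2 * (((i : ℕ) : ℝ) + 1)) ^ (σ (Fin.castAdd N i)).val) *
        ∏ j : Fin N, iteratedDeriv ((j : ℕ) + (σ (Fin.natAdd m j)).val) (phi γ) t)) := by
    intro σ
    have h := (hasSum_pi_prod N _ _ (fun j => hasSum_phi γ t hγ ht
      ((j : ℕ) + (σ (Fin.natAdd m j)).val))).mul_left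
        (∏ i : Fin m, (-2 * (((i : ℕ) : ℝ) + 1)) ^ (σ (Fin.castAdd N i)).val)
    have h2 := h.mul_left (((Equiv.Perm.sign σ : ℤˣ) : ℤ) : ℝ)
    simpa only [Units.smul_def, zsmul_eq_mul] using h2
  have hs := hasSum_sum (s := Finset.univ) (fun σ _ => key σ)
  convert hs using 1
  · funext x
    have e : summand t γ m N x = (Matrix.of fun i k : Fin (m + N) =>
        (Fin.append (fun _ : Fin m => (1 : ℝ)) (fun j : Fin N =>
          2 * (-2 * ((x j : ℝ) + 1)) ^ (j : ℕ) * vv t γ ((x j : ℝ) + 1))) i *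
        Matrix.vandermonde (fun i => -2 * Fin.append (fun i : Fin m => ((i : ℕ) : ℝ) + 1)
          (fun j : Fin N => (x j : ℝ) + 1) i) i k).det := by
      rw [Matrix.det_mul_column, vand_scale, vand_append, vand_first, Fin.prod_univ_add]
      simp only [Fin.append_left, Fin.append_right, Finset.prod_const_one, one_mul]
      rfl
    rw [e, ← Matrix.det_transpose, Matrix.det_apply]
    refine Finset.sum_congr rfl fun σ _ => ?_
    congr 1
    rw [Fin.prod_univ_add]
    simp only [Matrix.transpose_apply, Matrix.of_apply, Matrix.vandermonde_apply,
      Fin.append_left, Fin.append_right, one_mul]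
    congr 1
    refine Finset.prod_congr rfl fun j _ => ?_
    rw [pow_add]; ring
  · refine Finset.sum_congr rfl fun σ _ => ?_
    congr 1
    rw [Fin.prod_univ_add]
    simp

lemma prod_shift_zero (x m : ℕ) (h : x < m) :
    ∏ i : Fin m, (((x : ℝ) + 1) - (((i : ℕ) : ℝ) + 1)) = 0 :=
  Finset.prod_eq_zero (Finset.mem_univ ⟨x, h⟩) (by simp)

lemma prod_shift (x m : ℕ) :
    ∏ i : Fin m, ((((x + m : ℕ) : ℝ) + 1) - (((i : ℕ) : ℝ) + 1)) =
      ∏ k ∈ Finset.Icc 1 m, ((x : ℝ) + k) := by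
  rw [Fin.prod_univ_eq_prod_range (fun i => (((x + m : ℕ) : ℝ) + 1) - ((i : ℝ) + 1)),
    ← Finset.prod_range_reflect]
  rw [← Finset.Ico_add_one_right_eq_Icc, Finset.prod_Ico_eq_prod_range]
  refine Finset.prod_congr (by simp) fun i hi => ?_
  have hi' : i < m := by simpa using hi
  have : ((m - 1 - i : ℕ) : ℝ) = (m : ℝ) - 1 - i := by
    rw [Nat.cast_sub (by omega), Nat.cast_sub (by omega)]; simp
  rw [this]; push_cast; ring

/-- The symmetric summand. -/
noncomputable def symS (t γ : ℝ) (m N : ℕ) (x : Fin N → ℕ) : ℝ :=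
  (∏ j : Fin N, ∏ k ∈ Finset.Ioi j, ((x k : ℝ) - (x j : ℝ))) ^ 2 * ∏ j : Fin N, wfun t γ m (x j)

/-- The overall constant. -/
noncomputable def cst (m N : ℕ) : ℝ :=
  2 ^ N * (-2) ^ (N * (N - 1) / 2) * (-2) ^ ((m + N) * (m + N - 1) / 2) *
    ∏ j ∈ Finset.range m, (j.factorial : ℝ)

lemma summand_shift (t γ : ℝ) (m N : ℕ) (x : Fin N → ℕ) :
    summand t γ m N (fun j => x j + m) = cst m N * (∏ j : Fin N, wfun t γ m (x j)) *
      ((∏ j : Fin N, ((x j : ℝ) + (m + 1)) ^ (j : ℕ)) *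
        (Matrix.vandermonde (fun j => (x j : ℝ))).det) := by
  unfold summand cst
  simp only [prod_shift]
  have hv : (Matrix.vandermonde (fun j : Fin N => ((x j + m : ℕ) : ℝ) + 1)).det =
      (Matrix.vandermonde (fun j => (x j : ℝ))).det := by
    rw [← Matrix.det_vandermonde_add (fun j => (x j : ℝ)) ((m : ℝ) + 1)]
    congr 2; funext j; push_cast; ring
  rw [hv]
  have hw : ∏ j : Fin N, wfun t γ m (x j) = (∏ j : Fin N, vv t γ ((x j : ℝ) + m + 1)) *
      ∏ j : Fin N, ∏ k ∈ Finset.Icc 1 m, ((x j : ℝ) + k) := by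
    rw [← Finset.prod_mul_distrib]; rfl
  rw [hw]
  have hp : (∏ j : Fin N, (2 * (-2 * (((x j + m : ℕ) : ℝ) + 1)) ^ (j : ℕ) *
      vv t γ (((x j + m : ℕ) : ℝ) + 1))) = 2 ^ N * (-2) ^ (N * (N - 1) / 2) *
        (∏ j : Fin N, ((x j : ℝ) + (m + 1)) ^ (j : ℕ)) *
          ∏ j : Fin N, vv t γ ((x j : ℝ) + m + 1) := by
    have hc : ∏ j : Fin N, (-2 : ℝ) ^ (j : ℕ) = (-2) ^ (N * (N - 1) / 2) := by
      rw [Finset.prod_pow_eq_pow_sum,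
        Fin.sum_univ_eq_sum_range (fun i => i), Finset.sum_range_id]
    rw [← hc]
    simp only [mul_pow, Finset.prod_mul_distrib, Finset.prod_const, Finset.card_univ,
      Fintype.card_fin]
    push_cast
    simp only [add_assoc]
    ring
  rw [hp]
  ring

lemma symmetrize (N : ℕ) (x : Fin N → ℕ) (c : ℝ) :
    ∑ σ : Equiv.Perm (Fin N), ((∏ j : Fin N, ((x (σ j) : ℝ) + c) ^ (j : ℕ)) *
        (Matrix.vandermonde (fun j => (x (σ j) : ℝ))).det) =
      (∏ j : Fin N, ∏ k ∈ Finset.Ioi j, ((x k : ℝ) - (x j : ℝ))) ^ 2 := by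
  rw [← Matrix.det_vandermonde (fun j => (x j : ℝ)), sq]
  nth_rw 2 [← Matrix.det_vandermonde_add (fun j => (x j : ℝ)) c]
  rw [Matrix.det_apply (Matrix.vandermonde (fun i => (x i : ℝ) + c)), Finset.mul_sum]
  refine Finset.sum_congr rfl fun σ _ => ?_
  have : (Matrix.vandermonde (fun j => (x (σ j) : ℝ))).det =
      ((Equiv.Perm.sign σ : ℤˣ) : ℤ) * (Matrix.vandermonde (fun j => (x j : ℝ))).det := by
    rw [← Matrix.det_permute]; rfl
  rw [this]
  simp only [Matrix.vandermonde_apply, Units.smul_def, zsmul_eq_mul]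
  ring

lemma hasSum_sym (t γ : ℝ) (m N : ℕ) (A : ℝ) (h : HasSum (summand t γ m N) A) :
    HasSum (fun x => cst m N * symS t γ m N x) (N.factorial * A) := by
  have hinj : Function.Injective (fun (x : Fin N → ℕ) (j : Fin N) => x j + m) := by
    intro x y hxy
    funext j
    have := congrFun hxy j
    simpa using this
  rw [← hinj.hasSum_iff] at h
  · have h2 : ∀ σ : Equiv.Perm (Fin N), HasSum (fun x : Fin N → ℕ =>
        summand t γ m N (fun j => x (σ j) + m)) A := by
      intro σ
      have := (Equiv.arrowCongr σ.symm (Equiv.refl ℕ)).hasSum_iff.2 h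
      exact this
    have h3 := hasSum_sum (s := Finset.univ) (fun σ _ => h2 σ)
    simp only [Finset.sum_const, Finset.card_univ, Fintype.card_perm, Fintype.card_fin,
      nsmul_eq_mul] at h3
    convert h3 using 1
    funext x
    have e : ∀ σ : Equiv.Perm (Fin N), summand t γ m N (fun j => x (σ j) + m) =
        cst m N * (∏ j : Fin N, wfun t γ m (x j)) *
          ((∏ j : Fin N, ((x (σ j) : ℝ) + (m + 1)) ^ (j : ℕ)) *
          (Matrix.vandermonde (fun j => (x (σ j) : ℝ))).det) := by
      intro σ
      rw [summand_shift t γ m N (fun j => x (σ j)),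
        Equiv.prod_comp σ (fun j => wfun t γ m (x j))]
    simp only [e]
    rw [← Finset.mul_sum, symmetrize]
    unfold symS
    ring
  · intro x hx
    have : ∃ j, x j < m := by
      by_contra hcon
      push Not at hcon
      exact hx ⟨fun j => x j - m, by funext j; simp [hcon j]⟩
    obtain ⟨j, hj⟩ := this
    unfold summand
    rw [Finset.prod_eq_zero (f := fun j : Fin N =>
      ∏ i : Fin m, (((x j : ℝ) + 1) - (((i : ℕ) : ℝ) + 1))) (Finset.mem_univ j)
        (prod_shift_zero _ _ hj)]
    simp

lemma cst_eq (m N : ℕ) : cst m N =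
    (-1 : ℝ) ^ (m * (m + 1) / 2 + (m + N) * m) * 2 ^ ((m + N) * N + m * (m - 1) / 2) *
        (∏ j ∈ Finset.range m, (j.factorial : ℝ)) := by
  unfold cst
  congr 1
  have tri : ∀ k : ℕ, 2 * (k * (k - 1) / 2) + k = k * k := by
    intro k
    rw [Nat.mul_div_cancel' (Nat.even_mul_pred_self k).two_dvd]
    cases k with
    | zero => rfl
    | succ k => simp; ring
  have h1 := tri m
  have h2 := tri N
  have h3 := tri (m + N)
  have h4 := tri (m + 1)
  have h4' : (m + 1) * (m + 1 - 1) / 2 = m * (m + 1) / 2 := by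
    rw [Nat.add_sub_cancel, mul_comm]
  rw [h4'] at h4
  generalize m * (m - 1) / 2 = a at *
  generalize N * (N - 1) / 2 = b at *
  generalize (m + N) * (m + N - 1) / 2 = c at *
  generalize m * (m + 1) / 2 = d at *
  have hexp : N + b + c = (m + N) * N + a := by nlinarith
  have hpar : b + c + 2 * ((m + N) * m) + (m + N) = (d + (m + N) * m) + (m + N) * (m + N) := by
    nlinarith
  have hsign : (-1 : ℝ) ^ (b + c) = (-1) ^ (d + (m + N) * m) := by
    have e1 : (-1 : ℝ) ^ (b + c + 2 * ((m + N) * m) + (m + N)) =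
        (-1) ^ (b + c) * (-1) ^ (m + N) := by
      rw [pow_add, pow_add _ (b + c), pow_mul _ 2]; simp
    have e2 : (-1 : ℝ) ^ ((m + N) * (m + N)) = (-1) ^ (m + N) := by
      rcases Nat.even_or_odd (m + N) with h | h
      · rw [h.neg_one_pow, (h.mul_right _).neg_one_pow]
      · rw [h.neg_one_pow, (h.mul h).neg_one_pow]
    rw [hpar, pow_add, e2] at e1
    exact (mul_right_cancel₀ (pow_ne_zero _ (by norm_num)) e1).symm
  rw [← hexp, ← hsign, mul_assoc, ← pow_add, show (-2 : ℝ) = (-1) * 2 by norm_num, mul_pow]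
  rw [show N + b + c = N + (b + c) by ring, pow_add 2 N]
  ring

lemma tau_aux (n m N : ℕ) (hN : n = m + N) (t γ : ℝ) (hγ : 0 < γ) (ht : γ < t) :
    Summable (fun x : Fin N → ℕ =>
        (∏ j : Fin N, ∏ k ∈ Finset.Ioi j, ((x k : ℝ) - (x j : ℝ))) ^ 2 *
          ∏ j : Fin N, wfun t γ m (x j)) ∧
    (Matrix.of fun i k : Fin n =>
        if i.val < m then (-2 * ((i.val : ℝ) + 1)) ^ k.val
        else iteratedDeriv (i.val - m + k.val) (phi γ) t).det =
      (-1 : ℝ) ^ (m * (m + 1) / 2 + n * m) * 2 ^ (n * N + m * (m - 1) / 2) *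
        (∏ j ∈ Finset.range m, (j.factorial : ℝ)) * ((N.factorial : ℝ))⁻¹ *
        ∑' x : Fin N → ℕ,
          (∏ j : Fin N, ∏ k ∈ Finset.Ioi j, ((x k : ℝ) - (x j : ℝ))) ^ 2 *
            ∏ j : Fin N, wfun t γ m (x j) := by
  subst hN
  have h := hasSum_sym t γ m N _ (hasSum_det t γ hγ ht m N)
  have hc : cst m N ≠ 0 := by
    unfold cst
    have : ∏ j ∈ Finset.range m, (j.factorial : ℝ) ≠ 0 :=
      Finset.prod_ne_zero_iff.2 fun j _ => by exact_mod_cast j.factorial_ne_zero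
    simp [this]
  have hsum : Summable (symS t γ m N) := (summable_mul_left_iff hc).1 h.summable
  refine ⟨hsum, ?_⟩
  have h2 := h.unique (hsum.hasSum.mul_left _)
  have hf : (N.factorial : ℝ) ≠ 0 := by exact_mod_cast N.factorial_ne_zero
  rw [← cst_eq]
  change _ = cst m N * (N.factorial : ℝ)⁻¹ * ∑' x, symS t γ m N x
  rw [mul_right_comm, ← h2]
  field_simp

/-- The mixed Vandermonde/Hankel determinant `τ_{n-m,n}` equals
`(-1)^{m(m+1)/2 - nm} 2^{n(n-m)+m(m-1)/2} (∏_{j<m} j!) (1/(n-m)!) Σ_x Δ(x)² ∏_j w(x_j)`,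
the (absolutely convergent) sum running over all `(n-m)`-tuples of nonnegative integers.
(Note `(-1)^{m(m+1)/2 - nm} = (-1)^{m(m+1)/2 + nm}`.) -/
theorem tau_multiple_sum (n m : ℕ) (hn : 1 ≤ n) (hm : m < n) (t γ : ℝ)
    (hγ : 0 < γ) (ht : γ < t) :
    Summable (fun x : Fin (n - m) → ℕ =>
        (∏ j : Fin (n - m), ∏ k ∈ Finset.Ioi j, ((x k : ℝ) - (x j : ℝ))) ^ 2 *
          ∏ j : Fin (n - m), wfun t γ m (x j)) ∧
    (Matrix.of fun i k : Fin n =>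
        if i.val < m then (-2 * ((i.val : ℝ) + 1)) ^ k.val
        else iteratedDeriv (i.val - m + k.val) (phi γ) t).det =
      (-1 : ℝ) ^ (m * (m + 1) / 2 + n * m) * 2 ^ (n * (n - m) + m * (m - 1) / 2) *
        (∏ j ∈ Finset.range m, (j.factorial : ℝ)) * (((n - m).factorial : ℝ))⁻¹ *
        ∑' x : Fin (n - m) → ℕ,
          (∏ j : Fin (n - m), ∏ k ∈ Finset.Ioi j, ((x k : ℝ) - (x j : ℝ))) ^ 2 *
            ∏ j : Fin (n - m), wfun t γ m (x j) := by
  exact tau_aux n m (n - m) (by omega) t γ hγ ht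

end SixVertex
end

section
/- For every k ≥ 0, the normalizing constants satisfy the inequality | (h_k / h_k^M)^{1/2} − (h_k^M / h_k)^{1/2} | ≤ e^{−4γ(m+1)} / ( 1 − e^{−4γ(m+1)} )^{1/2}. -/
open scoped Classical

namespace SixVertex

/-- `IsMonicOPS w p h` says that `(p k)` is the system of monic orthogonal polynomials
on the nonnegative integers for the discrete weight `w`, with normalizing constants
`h k > 0`: each `p k` is monic of degree `k` and
`Σ_{x=0}^∞ p j (x) p k (x) w(x) = h k δ_{jk}` (the sums converging absolutely). -/
def IsMonicOPS (w : ℕ → ℝ) (p : ℕ → Polynomial ℝ) (h : ℕ → ℝ) : Prop :=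
  (∀ k, (p k).Monic ∧ (p k).natDegree = k) ∧ (∀ k, 0 < h k) ∧
    ∀ j k, HasSum (fun x : ℕ => (p j).eval (x : ℝ) * (p k).eval (x : ℝ) * w x)
      (if j = k then h k else 0)

lemma ortho_low {w : ℕ → ℝ} {p : ℕ → Polynomial ℝ} {h : ℕ → ℝ} (H : IsMonicOPS w p h) (k : ℕ) :
    ∀ n ≤ k, ∀ r : Polynomial ℝ, r.degree < n →
      HasSum (fun x : ℕ => r.eval (x : ℝ) * (p k).eval (x : ℝ) * w x) 0 := by
  intro n
  induction n with
  | zero =>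
    intro _ r hr
    have : r = 0 := by
      rw [← Polynomial.degree_eq_bot]
      exact Nat.WithBot.lt_zero_iff.mp (by simpa using hr)
    subst this
    simpa using (hasSum_zero : HasSum (fun _ : ℕ => (0 : ℝ)) 0)
  | succ n ih =>
    intro hn r hr
    obtain ⟨h1, h2, h3⟩ := H
    have hlow : (r - Polynomial.C (r.coeff n) * p n).degree < n := by
      rw [Polynomial.degree_lt_iff_coeff_zero]
      intro j hj
      rw [Polynomial.coeff_sub, Polynomial.coeff_C_mul]
      rcases Nat.eq_or_lt_of_le hj with rfl | hj
      · have := (h1 n).1.coeff_natDegree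
        rw [(h1 n).2] at this
        rw [this]; ring
      · rw [(Polynomial.degree_lt_iff_coeff_zero r (n+1)).1 hr j hj,
          Polynomial.coeff_eq_zero_of_natDegree_lt (p := p n) (n := j) (by rw [(h1 n).2]; exact hj)]
        ring
    have e1 := ih (by omega) _ hlow
    have e2 := h3 n k
    rw [if_neg (by omega)] at e2
    have e3 := e1.add (e2.mul_left (r.coeff n))
    simp only [mul_zero, add_zero] at e3
    convert e3 using 2
    simp only [Polynomial.eval_sub, Polynomial.eval_mul, Polynomial.eval_C]
    ring

lemma extremal {w : ℕ → ℝ} {p : ℕ → Polynomial ℝ} {h : ℕ → ℝ} (H : IsMonicOPS w p h)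
    (hw : ∀ x, 0 ≤ w x) (k : ℕ) (q : Polynomial ℝ) (hq : q.Monic) (hd : q.natDegree = k) (S : ℝ)
    (hS : HasSum (fun x : ℕ => q.eval (x : ℝ) * q.eval (x : ℝ) * w x) S) : h k ≤ S := by
  have hr : (q - p k).degree < k := by
    have := Polynomial.degree_sub_lt (p := q) (q := p k)
      (by rw [Polynomial.degree_eq_natDegree hq.ne_zero,
            Polynomial.degree_eq_natDegree (H.1 k).1.ne_zero, hd, (H.1 k).2])
      hq.ne_zero (by rw [hq.leadingCoeff, (H.1 k).1.leadingCoeff])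
    rwa [Polynomial.degree_eq_natDegree hq.ne_zero, hd] at this
  have e1 := ortho_low H k k le_rfl _ hr
  have e2 := H.2.2 k k
  rw [if_pos rfl] at e2
  have e3 := e2.add (e1.mul_left 2)
  simp only [mul_zero, add_zero] at e3
  refine hasSum_le (fun x => ?_) e3 hS
  have := mul_nonneg (sq_nonneg (q.eval (x:ℝ) - (p k).eval (x:ℝ))) (hw x)
  simp only [Polynomial.eval_sub]
  nlinarith

/-- The inequality `|(h_k/h_k^M)^{1/2} - (h_k^M/h_k)^{1/2}| ≤
e^{-4γ(m+1)}/(1 - e^{-4γ(m+1)})^{1/2}` for all `k ≥ 0`. -/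
theorem norm_ratio_inequality (t γ : ℝ) (m : ℕ) (hγ : 0 < γ) (ht : γ < t)
    (p pM : ℕ → Polynomial ℝ) (h hM : ℕ → ℝ)
    (hops : IsMonicOPS (wfun t γ m) p h) (hopsM : IsMonicOPS (wM t γ m) pM hM) (k : ℕ) :
    |Real.sqrt (h k / hM k) - Real.sqrt (hM k / h k)| ≤
      Real.exp (-4 * γ * ((m : ℝ) + 1)) /
        Real.sqrt (1 - Real.exp (-4 * γ * ((m : ℝ) + 1))) := by
  have hq0 : 0 < Real.exp (-4 * γ * ((m : ℝ) + 1)) := Real.exp_pos _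
  have hq1 : Real.exp (-4 * γ * ((m : ℝ) + 1)) < 1 := by
    rw [Real.exp_lt_one_iff]
    have : 0 < γ * ((m : ℝ) + 1) := by positivity
    linarith
  have hM0 : ∀ x, 0 ≤ wM t γ m x := fun x => by unfold wM; positivity
  have hfac : ∀ x : ℕ, wfun t γ m x
      = (1 - Real.exp (-4 * γ * ((x : ℝ) + m + 1))) * wM t γ m x := fun x => by
    have : Real.exp (-2 * (t + γ) * ((x : ℝ) + m + 1))
        = Real.exp (-4 * γ * ((x : ℝ) + m + 1)) * Real.exp (-2 * (t - γ) * ((x : ℝ) + m + 1)) := by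
      rw [← Real.exp_add]; congr 1; ring
    unfold wfun wM
    rw [this]; ring
  have hup : ∀ x, wfun t γ m x ≤ wM t γ m x := fun x => by
    rw [hfac]
    have := mul_nonneg (Real.exp_pos (-4 * γ * ((x : ℝ) + m + 1))).le (hM0 x)
    linarith
  have hlo : ∀ x, (1 - Real.exp (-4 * γ * ((m : ℝ) + 1))) * wM t γ m x ≤ wfun t γ m x := fun x => by
    rw [hfac]
    refine mul_le_mul_of_nonneg_right ?_ (hM0 x)
    have : Real.exp (-4 * γ * ((x : ℝ) + m + 1)) ≤ Real.exp (-4 * γ * ((m : ℝ) + 1)) := by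
      rw [Real.exp_le_exp]
      have : 0 ≤ γ * (x : ℝ) := by positivity
      nlinarith
    linarith
  generalize Real.exp (-4 * γ * ((m : ℝ) + 1)) = q at *
  have hq : 0 < 1 - q := by linarith
  have h0 : ∀ x, 0 ≤ wfun t γ m x := fun x => (mul_nonneg hq.le (hM0 x)).trans (hlo x)
  have hk := hops.2.1 k
  have hMk := hopsM.2.1 k
  have A : h k ≤ hM k := by
    have e := hopsM.2.2 k k
    rw [if_pos rfl] at e
    have hle : ∀ x : ℕ, (pM k).eval (x : ℝ) * (pM k).eval (x : ℝ) * wfun t γ m x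
        ≤ (pM k).eval (x : ℝ) * (pM k).eval (x : ℝ) * wM t γ m x := fun x =>
      mul_le_mul_of_nonneg_left (hup x) (mul_self_nonneg _)
    have s := Summable.of_nonneg_of_le (fun x => mul_nonneg (mul_self_nonneg _) (h0 x)) hle e.summable
    exact (extremal hops h0 k _ (hopsM.1 k).1 (hopsM.1 k).2 _ s.hasSum).trans
      (hasSum_le hle s.hasSum e)
  have B : (1 - q) * hM k ≤ h k := by
    have e := hops.2.2 k k
    rw [if_pos rfl] at e
    have e' := e.mul_left (1 - q)⁻¹
    have hle : ∀ x : ℕ, (p k).eval (x : ℝ) * (p k).eval (x : ℝ) * wM t γ m x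
        ≤ (1 - q)⁻¹ * ((p k).eval (x : ℝ) * (p k).eval (x : ℝ) * wfun t γ m x) := fun x => by
      rw [le_inv_mul_iff₀ hq]
      have := mul_le_mul_of_nonneg_left (hlo x) (mul_self_nonneg ((p k).eval (x : ℝ)))
      linarith
    have s := Summable.of_nonneg_of_le (fun x => mul_nonneg (mul_self_nonneg _) (hM0 x)) hle e'.summable
    rw [← le_inv_mul_iff₀ hq]
    exact (extremal hopsM hM0 k _ (hops.1 k).1 (hops.1 k).2 _ s.hasSum).trans
      (hasSum_le hle s.hasSum e')
  have hr1 : h k / hM k ≤ 1 := (div_le_one hMk).2 A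
  have hr2 : 1 - q ≤ h k / hM k := (le_div_iff₀ hMk).2 B
  have hinv : hM k / h k = (h k / hM k)⁻¹ := (inv_div _ _).symm
  rw [hinv, Real.sqrt_inv]
  generalize h k / hM k = r at *
  have hr : 0 < r := by linarith
  have hs : 0 < Real.sqrt r := Real.sqrt_pos.2 hr
  have hss := Real.mul_self_sqrt hr.le
  have hsub : Real.sqrt r - (Real.sqrt r)⁻¹ = -((1 - r) / Real.sqrt r) := by
    field_simp
    nlinarith
  rw [hsub, abs_neg, abs_of_nonneg (div_nonneg (by linarith) hs.le)]
  exact div_le_div₀ hq0.le (by linarith) (Real.sqrt_pos.2 hq) (Real.sqrt_le_sqrt hr2)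

end SixVertex
end

section
/- Fix real parameters t, γ with 0 < γ < t and fix ε > 0. Then there exist constants κ > 0 and C > 0 such that for all integers n, all m with nε ≤ m < n, and all k ≥ 0, one has h_k = h_k^M e^{r_k} with |r_k| ≤ C e^{−κ n}; equivalently, | h_k / h_k^M − 1 | ≤ C' e^{−4γ(m+1)} for some constant C' > 0 depending only on γ and ε. -/
open scoped Classical

namespace SixVertex

lemma ops_orth {w : ℕ → ℝ} {p : ℕ → Polynomial ℝ} {h : ℕ → ℝ} (H : IsMonicOPS w p h) (k d : ℕ) :
    d ≤ k → ∀ s : Polynomial ℝ, s.degree < (d : WithBot ℕ) →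
      HasSum (fun x : ℕ => (p k).eval (x : ℝ) * s.eval (x : ℝ) * w x) 0 := by
  induction d with
  | zero =>
    intro _ s hs
    have : s = 0 := by
      rw [← Polynomial.degree_eq_bot]
      exact Nat.WithBot.lt_zero_iff.mp (by simpa using hs)
    subst this
    simpa using (hasSum_zero : HasSum (fun _ : ℕ => (0 : ℝ)) 0)
  | succ d ih =>
    intro hd s hs
    have hs' : (s - Polynomial.C (s.coeff d) * p d).degree < (d : WithBot ℕ) := by
      rw [Polynomial.degree_lt_iff_coeff_zero]
      intro i hi
      rw [Polynomial.coeff_sub, Polynomial.coeff_C_mul]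
      rcases Nat.eq_or_lt_of_le hi with rfl | hi
      · have := (H.1 d).1.coeff_natDegree
        rw [(H.1 d).2] at this
        simp [this]
      · have h1 : s.coeff i = 0 :=
          (Polynomial.degree_lt_iff_coeff_zero s (d + 1)).1 (by exact_mod_cast hs) i hi
        have h2 : (p d).coeff i = 0 :=
          Polynomial.coeff_eq_zero_of_natDegree_lt (by rw [(H.1 d).2]; exact hi)
        simp [h1, h2]
    have h1 := ih (by omega) _ hs'
    have h2 := (H.2.2 k d).mul_left (s.coeff d)
    rw [if_neg (by omega)] at h2
    have h3 := h1.add h2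
    simp only [mul_zero, add_zero] at h3
    convert h3 using 2 with x
    simp
    ring

lemma ops_min {w : ℕ → ℝ} {p : ℕ → Polynomial ℝ} {h : ℕ → ℝ} (H : IsMonicOPS w p h)
    (hw : ∀ x, 0 ≤ w x) (k : ℕ) (q : Polynomial ℝ) (hq : q.Monic) (hk : q.natDegree = k) (A : ℝ)
    (hA : HasSum (fun x : ℕ => q.eval (x : ℝ) * q.eval (x : ℝ) * w x) A) : h k ≤ A := by
  have hs : (q - p k).degree < (k : WithBot ℕ) := by
    rw [Polynomial.degree_lt_iff_coeff_zero]
    intro i hi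
    rw [Polynomial.coeff_sub]
    have h1 := (H.1 k).1.coeff_natDegree
    rw [(H.1 k).2] at h1
    have h2 := hq.coeff_natDegree
    rw [hk] at h2
    rcases Nat.eq_or_lt_of_le hi with rfl | hi
    · simp [h1, h2]
    · rw [Polynomial.coeff_eq_zero_of_natDegree_lt (by rw [hk]; exact hi),
        Polynomial.coeff_eq_zero_of_natDegree_lt (by rw [(H.1 k).2]; exact hi), sub_zero]
  have ho := ops_orth H k k le_rfl _ hs
  have hp := H.2.2 k k
  rw [if_pos rfl] at hp
  have h3 := (hA.sub hp).sub (ho.mul_left 2)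
  have h4 : 0 ≤ A - h k - 2 * 0 := by
    refine h3.nonneg fun x => ?_
    have : q.eval (x : ℝ) * q.eval (x : ℝ) * w x - (p k).eval (x : ℝ) * (p k).eval (x : ℝ) * w x
        - 2 * ((p k).eval (x : ℝ) * (q - p k).eval (x : ℝ) * w x)
        = ((q.eval (x : ℝ) - (p k).eval (x : ℝ)) ^ 2) * w x := by
      simp only [Polynomial.eval_sub]; ring
    rw [this]
    exact mul_nonneg (sq_nonneg _) (hw x)
  linarith

/-- Comparison of norming constants for comparable weights. -/
lemma ops_compare {v w : ℕ → ℝ} {p q : ℕ → Polynomial ℝ} {h g : ℕ → ℝ} (c : ℝ)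
    (Hv : IsMonicOPS v p h) (Hw : IsMonicOPS w q g) (hv : ∀ x, 0 ≤ v x)
    (hvw : ∀ x, v x ≤ c * w x) (k : ℕ) : h k ≤ c * g k := by
  have hg := Hw.2.2 k k
  rw [if_pos rfl] at hg
  have hle : ∀ x : ℕ, (q k).eval (x : ℝ) * (q k).eval (x : ℝ) * v x ≤
      c * ((q k).eval (x : ℝ) * (q k).eval (x : ℝ) * w x) := fun x => by
    nlinarith [mul_le_mul_of_nonneg_left (hvw x) (mul_self_nonneg ((q k).eval (x : ℝ)))]
  have hsum : Summable (fun x : ℕ => (q k).eval (x : ℝ) * (q k).eval (x : ℝ) * v x) :=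
    Summable.of_nonneg_of_le (fun x => mul_nonneg (mul_self_nonneg _) (hv x)) hle
      (hg.mul_left c).summable
  exact (ops_min Hv hv k (q k) (Hw.1 k).1 (Hw.1 k).2 _ hsum.hasSum).trans
    (hasSum_le hle hsum.hasSum (hg.mul_left c))

lemma wM_nonneg (t γ : ℝ) (m x : ℕ) : 0 ≤ wM t γ m x := by
  unfold wM; positivity

lemma wfun_eq (t γ : ℝ) (m x : ℕ) :
    wfun t γ m x = (1 - Real.exp (-4 * γ * ((x : ℝ) + m + 1))) * wM t γ m x := by
  unfold wfun wM
  have : Real.exp (-2 * (t + γ) * ((x : ℝ) + m + 1)) =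
      Real.exp (-4 * γ * ((x : ℝ) + m + 1)) * Real.exp (-2 * (t - γ) * ((x : ℝ) + m + 1)) := by
    rw [← Real.exp_add]; congr 1; ring
  rw [this]; ring

/-- For `nε ≤ m < n`, `h_k = h_k^M e^{r_k}` with `|r_k| ≤ C e^{-κn}`, uniformly in `m`
and `k`; equivalently `|h_k/h_k^M - 1| ≤ C' e^{-4γ(m+1)}`. -/
theorem norm_ratio_asymptotics_large_m (t γ ε : ℝ) (hγ : 0 < γ) (ht : γ < t)
    (hε : 0 < ε) :
    ∃ κ > (0 : ℝ), ∃ C > (0 : ℝ), ∃ C' > (0 : ℝ), ∀ n m : ℕ,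
      (n : ℝ) * ε ≤ (m : ℝ) → m < n →
      ∀ (p pM : ℕ → Polynomial ℝ) (h hM : ℕ → ℝ),
        IsMonicOPS (wfun t γ m) p h → IsMonicOPS (wM t γ m) pM hM → ∀ k : ℕ,
          (∃ r : ℝ, h k = hM k * Real.exp r ∧ |r| ≤ C * Real.exp (-κ * n)) ∧
            |h k / hM k - 1| ≤ C' * Real.exp (-4 * γ * ((m : ℝ) + 1)) := by
  have hq0 : Real.exp (-4 * γ) < 1 := Real.exp_lt_one_iff.2 (by linarith)
  refine ⟨4 * γ * ε, by positivity, 1 / (1 - Real.exp (-4 * γ)),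
    div_pos one_pos (by linarith), 1, one_pos, ?_⟩
  intro n m hnm _ p pM h hM H HM k
  set q := Real.exp (-4 * γ * ((m : ℝ) + 1)) with hq
  have hm : (0 : ℝ) ≤ m := m.cast_nonneg
  have hqpos : 0 < q := Real.exp_pos _
  have hqq0 : q ≤ Real.exp (-4 * γ) := Real.exp_le_exp.2 (by nlinarith)
  have hqn : q ≤ Real.exp (-(4 * γ * ε) * n) := Real.exp_le_exp.2 (by nlinarith)
  have hlow : ∀ x, (1 - q) * wM t γ m x ≤ wfun t γ m x := fun x => by
    rw [wfun_eq]
    refine mul_le_mul_of_nonneg_right ?_ (wM_nonneg _ _ _ _)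
    have hx : (0 : ℝ) ≤ x := x.cast_nonneg
    have : Real.exp (-4 * γ * ((x : ℝ) + m + 1)) ≤ q := Real.exp_le_exp.2 (by nlinarith)
    linarith
  have h1q : 0 < 1 - q := by linarith
  have hw0 : ∀ x, 0 ≤ wfun t γ m x := fun x =>
    (mul_nonneg h1q.le (wM_nonneg _ _ _ _)).trans (hlow x)
  have hup : h k ≤ 1 * hM k := ops_compare 1 H HM hw0 (fun x => by
    rw [wfun_eq]
    refine mul_le_mul_of_nonneg_right ?_ (wM_nonneg _ _ _ _)
    linarith [Real.exp_pos (-4 * γ * ((x : ℝ) + m + 1))]) k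
  have hlo : hM k ≤ (1 - q)⁻¹ * h k := ops_compare _ HM H (wM_nonneg t γ m) (fun x => by
    rw [inv_mul_eq_div, le_div_iff₀ h1q, mul_comm]; exact hlow x) k
  have hMp : 0 < hM k := HM.2.1 k
  have hp : 0 < h k := H.2.1 k
  rw [inv_mul_eq_div, le_div_iff₀ h1q] at hlo
  have r1 : h k / hM k ≤ 1 := by rw [div_le_one hMp]; linarith
  have r2 : 1 - q ≤ h k / hM k := by rw [le_div_iff₀ hMp]; linarith
  have rp : 0 < h k / hM k := div_pos hp hMp
  refine ⟨⟨Real.log (h k / hM k), ?_, ?_⟩, ?_⟩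
  · rw [Real.exp_log rp]; field_simp
  · rw [abs_of_nonpos (Real.log_nonpos rp.le r1)]
    have hl : -Real.log (h k / hM k) ≤ -Real.log (1 - q) :=
      neg_le_neg (Real.log_le_log h1q r2)
    have hl2 := Real.one_sub_inv_le_log_of_pos h1q
    have hl3 : (1 - q)⁻¹ - 1 = 1 / (1 - q) * q := by field_simp; ring
    calc -Real.log (h k / hM k) ≤ 1 / (1 - q) * q := by linarith
      _ ≤ 1 / (1 - Real.exp (-4 * γ)) * Real.exp (-(4 * γ * ε) * n) := by
        refine mul_le_mul (one_div_le_one_div_of_le (by linarith) (by linarith)) hqn hqpos.le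
          (div_pos one_pos (by linarith)).le
  · rw [abs_le]; constructor <;> linarith

end SixVertex
end

section
/- Fix real parameters t, γ with 0 < γ < t and fix ε with 0 < ε < 1. Then there is a constant C_ε > 0 such that for all integers m ≥ 0 and all k ≥ 0, one has h_k = h_k^M e^{r_k} with |r_k| ≤ C_ε · e^{−2γm − k^{1−ε}}. -/
open scoped Classical

namespace SixVertex
open Polynomial Finset

lemma ops_aux {w : ℕ → ℝ} {p : ℕ → Polynomial ℝ} {h : ℕ → ℝ} (H : IsMonicOPS w p h) (n : ℕ) :
    ∀ q : Polynomial ℝ, q.degree < n → ∀ k, ∃ a : ℝ, (n ≤ k → a = 0) ∧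
      HasSum (fun x : ℕ => (p k).eval (x : ℝ) * q.eval (x : ℝ) * w x) a := by
  induction n with
  | zero =>
    intro q hq k
    have : q = 0 := by
      rw [← Polynomial.degree_eq_bot]
      simpa using hq
    refine ⟨0, fun _ => rfl, ?_⟩
    simp [this, hasSum_zero]
  | succ n ih =>
    intro q hq k
    have hq' : q.natDegree ≤ n := by
      rw [Polynomial.natDegree_le_iff_coeff_eq_zero]
      intro i hi
      exact (Polynomial.degree_lt_iff_coeff_zero _ _).1 hq i hi
    have hd : (q - C (q.coeff n) * p n).degree < n := by
      rw [Polynomial.degree_lt_iff_coeff_zero]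
      intro i hi
      rcases hi.eq_or_lt with rfl | hi
      · have : (p n).coeff n = 1 := by
          have := (H.1 n).1.coeff_natDegree
          rwa [(H.1 n).2] at this
        simp [this]
      · rw [coeff_sub, coeff_C_mul, Polynomial.coeff_eq_zero_of_natDegree_lt (lt_of_le_of_lt hq' hi),
          Polynomial.coeff_eq_zero_of_natDegree_lt (p := p n) (by rw [(H.1 n).2]; exact hi)]
        simp
    obtain ⟨a, ha, hs⟩ := ih _ hd k
    have h2 := (H.2.2 k n).mul_left (q.coeff n)
    refine ⟨_, ?_, (hs.add h2).congr_fun ?_⟩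
    · intro hk
      rw [ha (by omega), if_neg (by omega)]
      simp
    · intro x
      simp
      ring

lemma ops_lead {w : ℕ → ℝ} {p : ℕ → Polynomial ℝ} {h : ℕ → ℝ} (H : IsMonicOPS w p h) (k : ℕ)
    (q : Polynomial ℝ) (hq : q.natDegree ≤ k) :
    HasSum (fun x : ℕ => (p k).eval (x : ℝ) * q.eval (x : ℝ) * w x) (q.coeff k * h k) := by
  have hd : (q - C (q.coeff k) * p k).degree < k := by
    rw [Polynomial.degree_lt_iff_coeff_zero]
    intro i hi
    rcases hi.eq_or_lt with rfl | hi
    · have : (p k).coeff k = 1 := by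
        have := (H.1 k).1.coeff_natDegree
        rwa [(H.1 k).2] at this
      simp [this]
    · rw [coeff_sub, coeff_C_mul, Polynomial.coeff_eq_zero_of_natDegree_lt (lt_of_le_of_lt hq hi),
        Polynomial.coeff_eq_zero_of_natDegree_lt (p := p k) (by rw [(H.1 k).2]; exact hi)]
      simp
  obtain ⟨a, ha, hs⟩ := ops_aux H k _ hd k
  have h2 := (H.2.2 k k).mul_left (q.coeff k)
  have h3 := hs.add h2
  rw [ha le_rfl, if_pos rfl, zero_add] at h3
  refine h3.congr_fun ?_
  intro x
  simp
  ring

/-- Comparison step: orthogonality, the arithmetic-geometric mean inequality. -/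
lemma ops_compare_s12 {w v : ℕ → ℝ} {p f : ℕ → Polynomial ℝ} {h g : ℕ → ℝ}
    (H : IsMonicOPS w p h) (F : IsMonicOPS v f g) (k : ℕ) (e : ℕ → ℝ) (S : ℝ)
    (hv : ∀ x, 0 < w x) (hwv : ∀ x, w x ≤ v x)
    (he : ∀ x : ℕ, (f k).eval (x : ℝ) ^ 2 * v x * (v x / w x - 1) ≤ g k * e x) (hS : HasSum e S) :
    h k ≤ g k ∧ g k ≤ h k * (1 + S) := by
  have hp1 : (p k).coeff k = 1 := by
    have := (H.1 k).1.coeff_natDegree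
    rwa [(H.1 k).2] at this
  have hf1 : (f k).coeff k = 1 := by
    have := (F.1 k).1.coeff_natDegree
    rwa [(F.1 k).2] at this
  have A1 := ops_lead H k (f k) (F.1 k).2.le
  have A2 := ops_lead F k (p k) (H.1 k).2.le
  have B1 := H.2.2 k k
  have B2 := F.2.2 k k
  have hh := H.2.1 k
  have hg := F.2.1 k
  rw [if_pos rfl] at B1 B2
  rw [hf1, one_mul] at A1
  rw [hp1, one_mul] at A2
  constructor
  · have := hasSum_le (fun x => ?_) (A1.mul_left 2) (B1.add B2)
    · linarith
    · have h1 := hv x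
      have h2 := hwv x
      nlinarith [mul_nonneg h1.le (sq_nonneg ((p k).eval (x : ℝ) - (f k).eval (x : ℝ))),
        mul_nonneg (sub_nonneg.2 h2) (sq_nonneg ((f k).eval (x : ℝ)))]
  · have := hasSum_le (fun x => ?_) (A2.mul_left 2)
      ((B1.mul_left (g k / h k)).add ((B2.add (hS.mul_left (g k))).mul_left (h k / g k)))
    · have h1 : g k / h k * h k = g k := by field_simp
      have h2 : h k / g k * (g k + g k * S) = h k * (1 + S) := by field_simp
      rw [h1, h2] at this
      linarith
    · have h1 := hv x
      have h3 := he x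
      set P := (p k).eval (x : ℝ)
      set Q := (f k).eval (x : ℝ)
      have h4 : h k / g k * (Q * Q * v x + Q ^ 2 * v x * (v x / w x - 1)) ≤
          h k / g k * (Q * Q * v x + g k * e x) := by gcongr
      have h5 : 2 * (Q * P * v x) ≤ g k / h k * (P * P * w x) +
          h k / g k * (Q * Q * v x + Q ^ 2 * v x * (v x / w x - 1)) := by
        have : g k / h k * (P * P * w x) +
          h k / g k * (Q * Q * v x + Q ^ 2 * v x * (v x / w x - 1)) - 2 * (Q * P * v x) =
            w x * g k / h k * (P - h k / g k * Q * v x / w x) ^ 2 := by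
          field_simp
          ring
        have : 0 ≤ w x * g k / h k * (P - h k / g k * Q * v x / w x) ^ 2 := by positivity
        linarith
      linarith
end SixVertex

namespace SixVertex
open Polynomial Finset

lemma summable_poly_geom (c : ℝ) (hc0 : 0 < c) (hc1 : c < 1) (q : Polynomial ℝ) :
    Summable (fun x : ℕ => q.eval (x : ℝ) * c ^ x) := by
  simp_rw [Polynomial.eval_eq_sum_range, Finset.sum_mul]
  refine summable_sum fun i _ => ?_
  have := (summable_pow_mul_geometric_of_norm_lt_one (R := ℝ) i
    (r := c) (by rwa [Real.norm_of_nonneg hc0.le])).mul_left (q.coeff i)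
  simpa [mul_assoc] using this

lemma asc_eval (n a x : ℕ) : ((ascPochhammer ℝ n).comp (X + C ((a : ℝ) + 1))).eval (x : ℝ) =
    ((x + a + 1).ascFactorial n : ℝ) := by
  rw [eval_comp, Nat.cast_ascFactorial]
  congr 1
  simp
  ring

/-- Rodrigues polynomial. -/
noncomputable def rodr (c : ℝ) (m k : ℕ) : Polynomial ℝ :=
  ∑ j ∈ range (k + 1), C ((-1) ^ j * (k.choose j : ℝ) * c⁻¹ ^ j) *
    (descPochhammer ℝ j * (ascPochhammer ℝ (k - j)).comp (X + C ((m : ℝ) + 1)))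

lemma rodr_term (j k m : ℕ) (hj : j ≤ k) :
    (descPochhammer ℝ j * (ascPochhammer ℝ (k - j)).comp (X + C ((m : ℝ) + 1))).natDegree = k ∧
    (descPochhammer ℝ j * (ascPochhammer ℝ (k - j)).comp (X + C ((m : ℝ) + 1))).Monic := by
  have h1 := monic_descPochhammer ℝ j
  have h2 : ((ascPochhammer ℝ (k - j)).comp (X + C ((m : ℝ) + 1))).Monic :=
    (monic_ascPochhammer ℝ (k - j)).comp_X_add_C _
  refine ⟨?_, h1.mul h2⟩
  rw [h1.natDegree_mul h2, descPochhammer_natDegree, natDegree_comp, ascPochhammer_natDegree,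
    natDegree_X_add_C]
  omega

lemma rodr_natDegree (c : ℝ) (m k : ℕ) : (rodr c m k).natDegree ≤ k := by
  refine natDegree_sum_le_of_forall_le _ _ fun j hj => ?_
  refine (natDegree_C_mul_le _ _).trans (rodr_term j k m ?_).1.le
  have := Finset.mem_range.1 hj
  omega

lemma rodr_coeff (c : ℝ) (m k : ℕ) : (rodr c m k).coeff k = (1 - c⁻¹) ^ k := by
  unfold rodr
  rw [finsetSum_coeff]
  have : (1 - c⁻¹) ^ k = (-c⁻¹ + 1) ^ k := by ring
  rw [this, add_pow]
  refine Finset.sum_congr rfl fun j hj => ?_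
  have hj : j ≤ k := by
    have := Finset.mem_range.1 hj
    omega
  obtain ⟨h1, h2⟩ := rodr_term j k m hj
  have h3 := h2.coeff_natDegree
  rw [h1] at h3
  rw [coeff_C_mul, h3, neg_pow]
  ring

lemma asc_identity (y j k m : ℕ) (hj : j ≤ k) :
    (y + j).descFactorial j * (y + j + m + 1).ascFactorial (k - j) * (y + j + 1).ascFactorial m
      = (y + 1).ascFactorial (m + k) := by
  rw [Nat.add_descFactorial_eq_ascFactorial]
  have h1 := Nat.ascFactorial_mul_ascFactorial (y + 1) j m
  have h2 := Nat.ascFactorial_mul_ascFactorial (y + 1) (j + m) (k - j)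
  have e1 : y + 1 + j = y + j + 1 := by ring
  have e2 : y + 1 + (j + m) = y + j + m + 1 := by ring
  have e3 : j + m + (k - j) = m + k := by omega
  rw [e1] at h1
  rw [e2, e3] at h2
  rw [← h2, ← h1]
  ring

lemma rodr_eval (c : ℝ) (m k x : ℕ) : (rodr c m k).eval (x : ℝ) =
    ∑ j ∈ range (k + 1), ((-1) ^ j * (k.choose j : ℝ) * c⁻¹ ^ j) *
      ((x.descFactorial j : ℝ) * ((x + m + 1).ascFactorial (k - j) : ℝ)) := by
  unfold rodr
  rw [eval_finsetSum]
  refine Finset.sum_congr rfl fun j _ => ?_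
  rw [eval_mul, eval_C, eval_mul, asc_eval, descPochhammer_eval_eq_descFactorial]

lemma diff_lead (g : Polynomial ℝ) (k y : ℕ) (hg : g.natDegree ≤ k) :
    ∑ j ∈ range (k + 1), (-1 : ℝ) ^ j * (k.choose j : ℝ) * g.eval ((y + j : ℕ) : ℝ) =
      (-1) ^ k * (g.coeff k * (k.factorial : ℝ)) := by
  have h1 := fwdDiff_iter_eq_sum_shift (1 : ℝ) g.eval k (y : ℝ)
  have h2 : (fwdDiff (1 : ℝ))^[k] g.eval (y : ℝ) = g.coeff k * (k.factorial : ℝ) := by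
    rcases hg.eq_or_lt with h | h
    · subst h
      rw [Polynomial.fwdDiff_iter_degree_eq_factorial]
      simp
    · rw [Polynomial.fwdDiff_iter_eq_zero_of_degree_lt h,
        Polynomial.coeff_eq_zero_of_natDegree_lt h]
      simp
  rw [← h2, h1, Finset.mul_sum]
  refine Finset.sum_congr rfl fun j hj => ?_
  have hj : j ≤ k := by
    have := Finset.mem_range.1 hj
    omega
  obtain ⟨i, rfl⟩ := Nat.exists_eq_add_of_le hj
  have : ((-1 : ℝ)) ^ i * (-1) ^ i = 1 := by rw [← mul_pow]; simp
  simp [pow_add]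
  linear_combination (-(-1) ^ j * ((j + i).choose j : ℝ) * g.eval ((y : ℝ) + j)) * this

lemma rodr_hasSum (c : ℝ) (hc0 : 0 < c) (hc1 : c < 1) (m k : ℕ) (g : Polynomial ℝ)
    (hg : g.natDegree ≤ k) :
    HasSum (fun x : ℕ => (rodr c m k).eval (x : ℝ) * g.eval (x : ℝ) *
        (c ^ x * ((x + 1).ascFactorial m : ℝ)))
      ((-1) ^ k * (g.coeff k * (k.factorial : ℝ)) * ((m + k).factorial / (1 - c) ^ (m + k + 1))) := by
  -- terms
  have key : ∀ j ∈ range (k + 1), HasSum (fun x : ℕ =>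
      ((-1) ^ j * (k.choose j : ℝ) * c⁻¹ ^ j) *
      ((x.descFactorial j : ℝ) * ((x + m + 1).ascFactorial (k - j) : ℝ)) * g.eval (x : ℝ) *
        (c ^ x * ((x + 1).ascFactorial m : ℝ)))
      (∑' y : ℕ, (-1) ^ j * (k.choose j : ℝ) * g.eval ((y + j : ℕ) : ℝ) *
        (c ^ y * ((y + 1).ascFactorial (m + k) : ℝ))) := by
    intro j hj
    have hj : j ≤ k := by
      have := Finset.mem_range.1 hj
      omega
    rw [← (add_left_injective j).hasSum_iff]
    · have : Summable (fun y : ℕ => (-1) ^ j * (k.choose j : ℝ) * g.eval ((y + j : ℕ) : ℝ) *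
        (c ^ y * ((y + 1).ascFactorial (m + k) : ℝ))) := by
        have := summable_poly_geom c hc0 hc1 (C ((-1) ^ j * (k.choose j : ℝ)) *
          (g.comp (X + C (j : ℝ))) * ((ascPochhammer ℝ (m + k)).comp (X + C (((0 : ℕ) : ℝ) + 1))))
        refine this.congr fun y => ?_
        rw [eval_mul, asc_eval]
        simp
        ring
      refine this.hasSum.congr_fun ?_
      intro y
      simp only [Function.comp]
      rw [← asc_identity y j k m hj]
      push_cast
      have : c⁻¹ ^ j * c ^ (y + j) = c ^ y := by
        rw [pow_add, inv_pow]
        field_simp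
      rw [← this]
      ring
    · intro x hx
      have : x < j := by
        by_contra hcon
        exact hx ⟨x - j, by simp; omega⟩
      rw [Nat.descFactorial_eq_zero_iff_lt.2 this]
      simp
  have h1 := hasSum_sum key
  have h2 : ∀ j ∈ range (k + 1), Summable (fun y : ℕ => (-1) ^ j * (k.choose j : ℝ) * g.eval ((y + j : ℕ) : ℝ) *
        (c ^ y * ((y + 1).ascFactorial (m + k) : ℝ))) := by
    intro j _
    have := summable_poly_geom c hc0 hc1 (C ((-1) ^ j * (k.choose j : ℝ)) *
          (g.comp (X + C (j : ℝ))) * ((ascPochhammer ℝ (m + k)).comp (X + C (((0 : ℕ) : ℝ) + 1))))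
    refine this.congr fun y => ?_
    rw [eval_mul, asc_eval]
    simp
    ring
  rw [← Summable.tsum_finsetSum h2] at h1
  have h3 : ∀ y : ℕ, ∑ j ∈ range (k + 1), (-1) ^ j * (k.choose j : ℝ) * g.eval ((y + j : ℕ) : ℝ) *
        (c ^ y * ((y + 1).ascFactorial (m + k) : ℝ)) =
      (-1) ^ k * (g.coeff k * (k.factorial : ℝ)) * (m + k).factorial *
        (((y + (m + k)).choose (m + k) : ℝ) * c ^ y) := by
    intro y
    rw [← Finset.sum_mul, diff_lead g k y hg, Nat.ascFactorial_eq_factorial_mul_choose]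
    push_cast
    ring
  simp_rw [h3] at h1
  rw [tsum_mul_left, tsum_choose_mul_geometric_of_norm_lt_one _
    (by rwa [Real.norm_of_nonneg hc0.le])] at h1
  convert h1 using 1
  · ext x
    rw [rodr_eval, Finset.sum_mul, Finset.sum_mul]
  · ring
end SixVertex

namespace SixVertex
open Polynomial Finset

/-- The sum of absolute values in the Rodrigues formula. -/
noncomputable def tsumT (c : ℝ) (m k x : ℕ) : ℝ :=
  ∑ j ∈ range (k + 1), if j ≤ x then
    (k.choose j : ℝ) * c ^ (x - j) * ((x - j + (m + k)).choose (m + k) : ℝ) else 0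

lemma rodr_abs (c : ℝ) (hc0 : 0 < c) (m k x : ℕ) :
    |(rodr c m k).eval (x : ℝ)| * (c ^ x * ((x + 1).ascFactorial m : ℝ)) ≤
      (m + k).factorial * tsumT c m k x := by
  rw [rodr_eval, tsumT, Finset.mul_sum]
  refine (mul_le_mul_of_nonneg_right (Finset.abs_sum_le_sum_abs _ _) (by positivity)).trans ?_
  rw [Finset.sum_mul]
  refine Finset.sum_le_sum fun j hj => ?_
  have hj : j ≤ k := by
    have := Finset.mem_range.1 hj
    omega
  split_ifs with h
  · obtain ⟨y, rfl⟩ := Nat.exists_eq_add_of_le' h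
    have h1 := asc_identity y j k m hj
    rw [Nat.ascFactorial_eq_factorial_mul_choose y (m + k)] at h1
    have h2 : (((y + j).descFactorial j : ℝ) * ((y + j + m + 1).ascFactorial (k - j) : ℝ) *
      ((y + j + 1).ascFactorial m : ℝ)) = (m + k).factorial * ((y + (m + k)).choose (m + k) : ℝ) := by
      exact_mod_cast h1
    have h3 : c⁻¹ ^ j * c ^ (y + j) = c ^ y := by
      rw [pow_add, inv_pow]
      field_simp
    rw [abs_mul, abs_mul, abs_mul, abs_pow, abs_neg, abs_one, one_pow, one_mul, Nat.abs_cast,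
      abs_of_nonneg (by positivity : 0 ≤ c⁻¹ ^ j), abs_of_nonneg (by positivity)]
    rw [Nat.add_sub_cancel, ← h3]
    apply le_of_eq
    linear_combination (k.choose j : ℝ) * c⁻¹ ^ j * c ^ (y + j) * h2
  · rw [Nat.descFactorial_eq_zero_iff_lt.2 (by omega)]
    simp

lemma meixner_point {v : ℕ → ℝ} {f : ℕ → Polynomial ℝ} {g : ℕ → ℝ} (F : IsMonicOPS v f g)
    (c K : ℝ) (hc0 : 0 < c) (hc1 : c < 1) (hK : 0 < K) (m : ℕ)
    (hv : ∀ x, v x = K * (c ^ x * ((x + 1).ascFactorial m : ℝ))) (k x : ℕ) :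
    (f k).eval (x : ℝ) ^ 2 * v x * c ^ x ≤
      g k * (c ^ k * ((m + k).choose m : ℝ) * tsumT c m k x ^ 2) := by
  set U := rodr c m k with hU
  set L : ℝ := (1 - c⁻¹) ^ k with hL
  have hA : ∀ x : ℕ, (0 : ℝ) < ((x + 1).ascFactorial m : ℝ) := fun x => by
    exact_mod_cast Nat.ascFactorial_pos x m
  have hv0 : ∀ x, 0 < v x := fun x => by
    rw [hv]
    have := hA x
    positivity
  have hf1 : (f k).coeff k = 1 := by
    have := (F.1 k).1.coeff_natDegree
    rwa [(F.1 k).2] at this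
  have hUd : U.natDegree ≤ k := rodr_natDegree c m k
  have hUc : U.coeff k = L := rodr_coeff c m k
  have hR : ∀ q : Polynomial ℝ, q.natDegree ≤ k →
      HasSum (fun x : ℕ => U.eval (x : ℝ) * q.eval (x : ℝ) * v x)
      (K * ((-1) ^ k * (q.coeff k * (k.factorial : ℝ)) *
        ((m + k).factorial / (1 - c) ^ (m + k + 1)))) := by
    intro q hq
    refine ((rodr_hasSum c hc0 hc1 m k q hq).mul_left K).congr_fun ?_
    intro x
    rw [hv, hU]
    ring
  -- the difference vanishes
  set V := U - C L * f k with hV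
  have hVd : V.natDegree ≤ k := by
    refine (natDegree_sub_le _ _).trans (max_le hUd ?_)
    exact (natDegree_C_mul_le _ _).trans (F.1 k).2.le
  have hVc : V.coeff k = 0 := by
    rw [hV, coeff_sub, coeff_C_mul, hf1, hUc]
    ring
  have s1 := hR V hVd
  have s2 := (ops_lead F k V hVd).mul_left L
  rw [hVc] at s1 s2
  have s3 : HasSum (fun x : ℕ => V.eval (x : ℝ) ^ 2 * v x) 0 := by
    have := s1.sub s2
    simp only [zero_mul, mul_zero, sub_zero] at this
    refine this.congr_fun ?_
    intro x
    have : V.eval (x : ℝ) = U.eval (x : ℝ) - L * (f k).eval (x : ℝ) := by simp [hV]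
    rw [this]
    ring
  have hVx : V.eval (x : ℝ) = 0 := by
    have h0 := (hasSum_zero_iff_of_nonneg
      (fun x => mul_nonneg (sq_nonneg _) (hv0 x).le)).1 s3
    have h1 := congrFun h0 x
    have h2 := hv0 x
    simpa [h2.ne'] using h1
  have hUx : U.eval (x : ℝ) = L * (f k).eval (x : ℝ) := by
    have : V.eval (x : ℝ) = U.eval (x : ℝ) - L * (f k).eval (x : ℝ) := by simp [hV]
    linarith
  -- the norm
  have hnorm : L * g k = K * ((-1) ^ k * (k.factorial : ℝ) *
        ((m + k).factorial / (1 - c) ^ (m + k + 1))) := by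
    have s4 := hR (f k) (F.1 k).2.le
    have s5 := ops_lead F k U hUd
    rw [hUc] at s5
    rw [hf1, one_mul] at s4
    refine s5.unique (s4.congr_fun ?_)
    intro x
    ring
  have h1c : 0 < 1 - c := by linarith
  have hLc : L * c ^ k = (-1) ^ k * (1 - c) ^ k := by
    rw [hL, ← mul_pow, ← mul_pow]
    congr 1
    field_simp
    ring
  have hneg : ((-1 : ℝ)) ^ k * (-1) ^ k = 1 := by rw [← mul_pow]; simp
  have hL0 : 0 < L ^ 2 := by
    have : L ≠ 0 := by
      intro h
      rw [h] at hLc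
      have h2 : (1 - c) ^ k ≠ 0 := by positivity
      rcases mul_eq_zero.1 (hLc.symm.trans (zero_mul _)) with h3 | h3
      · simp at h3
      · exact h2 h3
    positivity
  have hch : ((m + k).factorial : ℝ) = (m + k).choose m * m.factorial * k.factorial := by
    have := Nat.add_choose_mul_factorial_mul_factorial m k
    rw [← Nat.choose_symm_add] at this
    rw [← this]
    push_cast
    ring
  -- L^2 * g * c^k in closed form
  have hg2 : L ^ 2 * g k * c ^ k * (1 - c) ^ (m + 1) = K * k.factorial * (m + k).factorial := by
    have e : L ^ 2 * g k * c ^ k * (1 - c) ^ (m + 1) =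
      (L * c ^ k) * (L * g k) * (1 - c) ^ (m + 1) := by ring
    rw [e, hLc, hnorm]
    have e2 : (1 - c) ^ (m + k + 1) = (1 - c) ^ k * (1 - c) ^ (m + 1) := by ring
    rw [e2]
    field_simp
    linear_combination hneg
  have habs := rodr_abs c hc0 m k x
  have hm : (m.factorial : ℝ) ≤ ((x + 1).ascFactorial m : ℝ) := by
    have : m.factorial ≤ (x + 1).ascFactorial m := by
      rw [← Nat.one_ascFactorial]
      exact Nat.ascFactorial_le m (by omega)
    exact_mod_cast this
  set T := tsumT c m k x
  set a : ℝ := ((x + 1).ascFactorial m : ℝ) with ha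
  have hap := hA x
  have hT : 0 ≤ (m + k).factorial * T := le_trans (by positivity) habs
  have hsq : (|U.eval (x : ℝ)| * (c ^ x * a)) ^ 2 ≤ ((m + k).factorial * T) ^ 2 := by
    gcongr
  rw [mul_pow, sq_abs, hUx] at hsq
  have hgk := F.2.1 k
  have hcx : 0 < c ^ x := by positivity
  have hmf : (0 : ℝ) < m.factorial := by positivity
  -- conclude
  have h5 : L ^ 2 * m.factorial * ((f k).eval (x : ℝ) ^ 2 * v x * c ^ x) ≤
      K * ((m + k).factorial * T) ^ 2 := by
    calc L ^ 2 * m.factorial * ((f k).eval (x : ℝ) ^ 2 * v x * c ^ x)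
        = K * (L ^ 2 * (f k).eval (x : ℝ) ^ 2 * (c ^ x) ^ 2 * a * m.factorial) := by
          rw [hv]; ring
      _ ≤ K * (L ^ 2 * (f k).eval (x : ℝ) ^ 2 * (c ^ x) ^ 2 * a * a) := by gcongr
      _ = K * ((L * (f k).eval (x : ℝ)) ^ 2 * (c ^ x * a) ^ 2) := by ring
      _ ≤ _ := by gcongr
  have h6 : K * ((m + k).factorial * T) ^ 2 = L ^ 2 * m.factorial *
      ((1 - c) ^ (m + 1) * (g k * (c ^ k * ((m + k).choose m : ℝ) * T ^ 2))) := by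
    have : K * ((m + k).factorial * T) ^ 2 =
        (K * k.factorial * (m + k).factorial) * ((m + k).choose m * m.factorial * T ^ 2) := by
      calc K * ((m + k).factorial * T) ^ 2
         = K * (m + k).factorial * T ^ 2 * (m + k).factorial := by ring
       _ = K * (m + k).factorial * T ^ 2 * ((m + k).choose m * m.factorial * k.factorial) := by
          rw [← hch]
       _ = _ := by ring
    rw [this, ← hg2]
    ring
  rw [h6] at h5
  have h7 := le_of_mul_le_mul_left h5 (by positivity)
  refine h7.trans (mul_le_of_le_one_left (by positivity) ?_)
  exact pow_le_one₀ h1c.le (by linarith)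

lemma choose_le_s (s : ℝ) (hs : 0 < s) (n j : ℕ) : (n.choose j : ℝ) ≤ s⁻¹ ^ j * (1 + s) ^ n := by
  rcases le_or_gt j n with h | h
  · have : (n.choose j : ℝ) * s ^ j ≤ (1 + s) ^ n := by
      rw [add_comm, add_pow]
      have := Finset.single_le_sum (f := fun i => s ^ i * 1 ^ (n - i) * (n.choose i : ℝ))
        (s := range (n + 1)) (fun i _ => by positivity) (Finset.mem_range.2 (Nat.lt_succ_of_le h))
      simp only [one_pow, mul_one] at this
      simp only [one_pow, mul_one]
      linarith
    calc (n.choose j : ℝ) = s⁻¹ ^ j * ((n.choose j : ℝ) * s ^ j) := by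
          rw [inv_pow]
          field_simp
      _ ≤ _ := by gcongr
  · rw [Nat.choose_eq_zero_of_lt h]
    simp only [Nat.cast_zero]
    positivity

lemma tsumT_le (c s : ℝ) (hc0 : 0 < c) (hc1 : c < 1) (hs : 0 < s) (hs1 : s < 1) (m k x : ℕ) :
    tsumT c m k x ≤ s⁻¹ * (s⁻¹ ^ 2 * (1 + s)) ^ (x + m) * ((1 + s) ^ 3) ^ k := by
  have hs' : 1 ≤ s⁻¹ := (one_le_inv₀ hs).2 hs1.le
  have h1 : tsumT c m k x ≤ ∑ j ∈ range (k + 1),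
      (s⁻¹ ^ x * (1 + s) ^ k) * (s⁻¹ ^ x * (1 + s) ^ (x + (m + k))) := by
    refine Finset.sum_le_sum fun j _ => ?_
    split_ifs with h
    · have a1 : (k.choose j : ℝ) ≤ s⁻¹ ^ x * (1 + s) ^ k :=
        (choose_le_s s hs k j).trans (by gcongr)
      have a2 : ((x - j + (m + k)).choose (m + k) : ℝ) ≤ s⁻¹ ^ x * (1 + s) ^ (x + (m + k)) := by
        rw [Nat.choose_symm_add.symm]
        refine (choose_le_s s hs _ _).trans ?_
        have hs2 : 1 ≤ 1 + s := by linarith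
        have hx : x - j ≤ x := by omega
        gcongr
      have a3 : c ^ (x - j) ≤ 1 := pow_le_one₀ hc0.le hc1.le
      calc _ ≤ (k.choose j : ℝ) * 1 * ((x - j + (m + k)).choose (m + k) : ℝ) := by gcongr
        _ ≤ _ := by rw [mul_one]; gcongr
    · positivity
  refine h1.trans ?_
  rw [Finset.sum_const, Finset.card_range, nsmul_eq_mul]
  have hb : (((k + 1 : ℕ) : ℝ)) ≤ s⁻¹ * (1 + s) ^ k := by
    have := one_add_mul_le_pow (a := s) (by linarith) k
    push_cast
    rw [inv_mul_eq_div, le_div_iff₀ hs]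
    nlinarith
  calc _ ≤ (s⁻¹ * (1 + s) ^ k) * ((s⁻¹ ^ x * (1 + s) ^ k) * (s⁻¹ ^ x * (1 + s) ^ (x + (m + k)))) := by
        gcongr
    _ = s⁻¹ * (s⁻¹ ^ x * s⁻¹ ^ x * (1 + s) ^ (x + m)) * ((1 + s) ^ 3) ^ k := by
        generalize s⁻¹ = z
        generalize 1 + s = u
        ring
    _ ≤ s⁻¹ * (s⁻¹ ^ (x + m) * s⁻¹ ^ (x + m) * (1 + s) ^ (x + m)) * ((1 + s) ^ 3) ^ k := by
        gcongr <;> first | exact hs' | omega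
    _ = _ := by
        generalize s⁻¹ = z
        generalize 1 + s = u
        ring

lemma exists_bound (c : ℝ) (hc0 : 0 < c) (hc1 : c < 1) :
    ∃ B θ D : ℝ, 1 ≤ B ∧ 0 < θ ∧ θ < 1 ∧ 1 ≤ D ∧ ∀ m k x : ℕ,
      c⁻¹ ^ x * (c ^ k * ((m + k).choose m : ℝ) * tsumT c m k x ^ 2) ≤ D * B ^ (x + m) * θ ^ k := by
  obtain ⟨s, hs, hs1, hsc⟩ : ∃ s : ℝ, 0 < s ∧ s < 1 ∧ c * (1 + s) ^ 7 < 1 := by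
    have h1 : Filter.Tendsto (fun s : ℝ => c * (1 + s) ^ 7) (nhdsWithin 0 (Set.Ioi 0))
        (nhds (c * (1 + 0) ^ 7)) := by
      refine Filter.Tendsto.mono_left (Continuous.tendsto ?_ 0) nhdsWithin_le_nhds
      fun_prop
    have h2 := h1.eventually_lt_const (u := 1) (by simpa using hc1)
    have h3 : ∀ᶠ s : ℝ in nhdsWithin 0 (Set.Ioi 0), s ∈ Set.Ioo (0 : ℝ) 1 :=
      Ioo_mem_nhdsGT (by norm_num)
    obtain ⟨s, hs2, hs3⟩ := (h2.and h3).exists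
    exact ⟨s, hs3.1, hs3.2, hs2⟩
  have hs' : 1 ≤ s⁻¹ := (one_le_inv₀ hs).2 hs1.le
  have hc' : 1 ≤ c⁻¹ := (one_le_inv₀ hc0).2 hc1.le
  have hs2 : 1 ≤ 1 + s := by linarith
  refine ⟨c⁻¹ * (s⁻¹ * (1 + s)) * (s⁻¹ ^ 2 * (1 + s)) ^ 2, c * (1 + s) ^ 7, s⁻¹ ^ 2, ?_,
    by positivity, hsc, one_le_pow₀ hs', ?_⟩
  · exact one_le_mul_of_one_le_of_one_le (one_le_mul_of_one_le_of_one_le hc'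
      (one_le_mul_of_one_le_of_one_le hs' hs2))
      (one_le_pow₀ (one_le_mul_of_one_le_of_one_le (one_le_pow₀ hs') hs2))
  intro m k x
  have hT0 : 0 ≤ tsumT c m k x := Finset.sum_nonneg fun j _ => by
    split_ifs <;> positivity
  have hT := tsumT_le c s hc0 hc1 hs hs1 m k x
  have hch := choose_le_s s hs (m + k) m
  calc _ ≤ c⁻¹ ^ (x + m) * (c ^ k * (s⁻¹ ^ (x + m) * (1 + s) ^ (x + m + k)) *
        (s⁻¹ * (s⁻¹ ^ 2 * (1 + s)) ^ (x + m) * ((1 + s) ^ 3) ^ k) ^ 2) := by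
        have e1 : x ≤ x + m := by omega
        have e2 : m ≤ x + m := by omega
        gcongr
        refine hch.trans ?_
        gcongr
    _ = _ := by
        generalize s⁻¹ = z
        generalize 1 + s = u
        ring

end SixVertex

namespace SixVertex
open Polynomial Finset

lemma prod_eq (m x : ℕ) : ∏ k ∈ Finset.Icc 1 m, ((x : ℝ) + k) = ((x + 1).ascFactorial m : ℝ) := by
  induction m with
  | zero => simp
  | succ n ih =>
    rw [Finset.prod_Icc_succ_top (by omega), ih, Nat.ascFactorial_succ]
    push_cast
    ring

lemma pow_bound (a ε : ℝ) (ha : 0 < a) (hε0 : 0 < ε) (hε1 : ε < 1) :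
    ∃ N : ℝ, ∀ k : ℕ, (k : ℝ) ^ ((1 : ℝ) - ε) ≤ a * k + N := by
  set K0 : ℝ := (1 / a) ^ (1 / ε) with hK
  have hK0 : 0 < K0 := by positivity
  refine ⟨K0 ^ (1 - ε), fun k => ?_⟩
  have hk : (0 : ℝ) ≤ k := Nat.cast_nonneg k
  rcases le_or_gt (k : ℝ) K0 with h | h
  · have : (k : ℝ) ^ (1 - ε) ≤ K0 ^ (1 - ε) := Real.rpow_le_rpow hk h (by linarith)
    nlinarith [mul_nonneg ha.le hk]
  · have hk0 : (0 : ℝ) < k := hK0.trans h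
    have h1 : 1 / a ≤ (k : ℝ) ^ ε := by
      have : K0 ^ ε ≤ (k : ℝ) ^ ε := Real.rpow_le_rpow hK0.le h.le hε0.le
      rwa [hK, ← Real.rpow_mul (by positivity), one_div_mul_cancel hε0.ne', Real.rpow_one] at this
    have h2 : (k : ℝ) ^ (1 - ε) * (k : ℝ) ^ ε = k := by
      rw [← Real.rpow_add hk0]
      simp
    have h3 : 0 < (k : ℝ) ^ (1 - ε) := by positivity
    have h4 : 1 ≤ a * (k : ℝ) ^ ε := by
      rw [div_le_iff₀ ha] at h1
      linarith
    have h5 : 0 < K0 ^ (1 - ε) := by positivity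
    have h6 : a * k = (k : ℝ) ^ (1 - ε) * (a * (k : ℝ) ^ ε) := by
      linear_combination -a * h2
    nlinarith

lemma exp_interp (z α : ℝ) (h0 : 0 ≤ α) (h1 : α ≤ 1) (y : ℝ) (hy1 : y ≤ 1)
    (hy : y ≤ Real.exp z) : y ≤ Real.exp (α * z) := by
  rcases le_or_gt z 0 with h | h
  · refine hy.trans (Real.exp_le_exp.2 ?_)
    nlinarith
  · refine hy1.trans (Real.one_le_exp (by positivity))

lemma exists_bound_exp (c : ℝ) (hc0 : 0 < c) (hc1 : c < 1) :
    ∃ a b d : ℝ, 0 < a ∧ 0 ≤ b ∧ 0 ≤ d ∧ ∀ m k x : ℕ,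
      c⁻¹ ^ x * (c ^ k * ((m + k).choose m : ℝ) * tsumT c m k x ^ 2) ≤
        Real.exp (d + b * (x + m) - a * k) := by
  obtain ⟨B, θ, D, hB, hθ, hθ1, hD, H⟩ := exists_bound c hc0 hc1
  refine ⟨-Real.log θ, Real.log B, Real.log D, by linarith [Real.log_neg hθ hθ1],
    Real.log_nonneg hB, Real.log_nonneg hD, fun m k x => (H m k x).trans (le_of_eq ?_)⟩
  have e : Real.log D + Real.log B * (x + m) - -Real.log θ * k =
    Real.log D + ((x + m : ℕ) : ℝ) * Real.log B + k * Real.log θ := by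
    push_cast
    ring
  rw [e, Real.exp_add, Real.exp_add, Real.exp_nat_mul, Real.exp_nat_mul, Real.exp_log hθ,
    Real.exp_log (by linarith), Real.exp_log (by linarith)]

theorem norm_ratio_asymptotics_all_m (t γ ε : ℝ) (hγ : 0 < γ) (ht : γ < t)
    (hε0 : 0 < ε) (hε1 : ε < 1) :
    ∃ C > (0 : ℝ), ∀ m : ℕ, ∀ (p pM : ℕ → Polynomial ℝ) (h hM : ℕ → ℝ),
      IsMonicOPS (wfun t γ m) p h → IsMonicOPS (wM t γ m) pM hM → ∀ k : ℕ,
        ∃ r : ℝ, h k = hM k * Real.exp r ∧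
          |r| ≤ C * Real.exp (-2 * γ * (m : ℝ) - (k : ℝ) ^ ((1 : ℝ) - ε)) := by
  set c : ℝ := Real.exp (-2 * (t - γ)) with hc
  have hc0 : 0 < c := Real.exp_pos _
  have hc1 : c < 1 := by
    rw [hc, Real.exp_lt_one_iff]
    linarith
  obtain ⟨a, b, d, ha, hb, hd, hbound⟩ := exists_bound_exp c hc0 hc1
  set α : ℝ := γ / (γ + b) with hα
  have hα0 : 0 < α := by positivity
  have hα1 : α ≤ 1 := by
    rw [hα, div_le_one (by positivity)]
    linarith
  have hαb : α * b ≤ γ := by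
    rw [hα, div_mul_eq_mul_div, div_le_iff₀ (by positivity)]
    nlinarith
  obtain ⟨N, hN⟩ := pow_bound (α * a) ε (by positivity) hε0 hε1
  set q : ℝ := Real.exp (-4 * γ) with hq
  have hq0 : 0 < q := Real.exp_pos _
  have hq1 : q < 1 := by
    rw [hq, Real.exp_lt_one_iff]
    linarith
  set s : ℝ := Real.exp (-3 * γ) with hs
  have hs0 : 0 < s := Real.exp_pos _
  have hs1 : s < 1 := by
    rw [hs, Real.exp_lt_one_iff]
    linarith
  have hq1' : 0 < 1 - q := by linarith
  have hs1' : 0 < 1 - s := by linarith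
  set M : ℝ := Real.exp (α * d) / (1 - q) with hM'
  have hMp : 0 < M := by positivity
  refine ⟨M * Real.exp N / (1 - s), by positivity, ?_⟩
  intro m p f h g H F k
  have hwM : ∀ x : ℕ, wM t γ m x = c ^ (m + 1) * (c ^ x * ((x + 1).ascFactorial m : ℝ)) := by
    intro x
    rw [wM, prod_eq, hc, ← Real.exp_nat_mul, ← Real.exp_nat_mul, ← mul_assoc, ← Real.exp_add]
    congr 2
    push_cast
    ring
  have hw : ∀ x : ℕ, wfun t γ m x = wM t γ m x * (1 - q ^ (x + m + 1)) := by
    intro x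
    have e : Real.exp (-2 * (t + γ) * ((x : ℝ) + m + 1)) =
        Real.exp (-2 * (t - γ) * ((x : ℝ) + m + 1)) * q ^ (x + m + 1) := by
      rw [hq, ← Real.exp_nat_mul, ← Real.exp_add]
      congr 1
      push_cast
      ring
    rw [wM, wfun, e]
    ring
  have hM0 : ∀ x, 0 < wM t γ m x := by
    intro x
    rw [hwM]
    have : (0 : ℝ) < ((x + 1).ascFactorial m : ℝ) := by
      exact_mod_cast Nat.ascFactorial_pos x m
    positivity
  have hE : ∀ x : ℕ, q ^ (x + m + 1) ≤ q := fun x =>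
    pow_le_of_le_one hq0.le hq1.le (by omega)
  have hg := F.2.1 k
  have hh := H.2.1 k
  set A : ℝ := M * Real.exp (-3 * γ * m - α * a * k) with hA
  have hAp : 0 < A := by positivity
  have hcmp := ops_compare_s12 H F k (fun x => A * s ^ x) (A * (1 - s)⁻¹) ?_ ?_ ?_
    ((hasSum_geometric_of_lt_one hs0.le hs1).mul_left A)
  · obtain ⟨h1, h2⟩ := hcmp
    refine ⟨Real.log (h k / g k), ?_, ?_⟩
    · rw [Real.exp_log (by positivity)]
      field_simp
    · have hS : 0 < A * (1 - s)⁻¹ := by positivity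
      have hlog : |Real.log (h k / g k)| ≤ A * (1 - s)⁻¹ := by
        have e1 : Real.log (h k / g k) ≤ 0 :=
          Real.log_nonpos (by positivity) ((div_le_one hg).2 h1)
        rw [abs_of_nonpos e1, ← Real.log_inv, inv_div]
        have e2 : g k / h k ≤ 1 + A * (1 - s)⁻¹ := by
          rw [div_le_iff₀ hh]
          linarith
        have e3 := Real.log_le_sub_one_of_pos (x := g k / h k) (by positivity)
        linarith
      refine hlog.trans ?_
      have e5 : A * (1 - s)⁻¹ = M / (1 - s) * Real.exp (-3 * γ * m - α * a * k) := by
        rw [hA]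
        ring
      have e6 : M * Real.exp N / (1 - s) * Real.exp (-2 * γ * m - (k : ℝ) ^ (1 - ε)) =
          M / (1 - s) * Real.exp (N + (-2 * γ * m - (k : ℝ) ^ (1 - ε))) := by
        rw [Real.exp_add N]
        ring
      rw [e5, e6]
      refine mul_le_mul_of_nonneg_left (Real.exp_le_exp.2 ?_) (by positivity)
      have := hN k
      have hm : (0 : ℝ) ≤ m := Nat.cast_nonneg m
      nlinarith [mul_nonneg hγ.le hm]
  · intro x
    rw [hw]
    have := hE x
    exact mul_pos (hM0 x) (by linarith)
  · intro x
    rw [hw]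
    have : 0 < q ^ (x + m + 1) := by positivity
    nlinarith [hM0 x]
  · intro x
    have hv := hM0 x
    have hEx := hE x
    have hEp : 0 < q ^ (x + m + 1) := by positivity
    set Q := (f k).eval (x : ℝ)
    have y1 : Q ^ 2 * wM t γ m x / g k ≤ 1 := by
      rw [div_le_one hg]
      have h1 := F.2.2 k k
      rw [if_pos rfl] at h1
      have := le_hasSum h1 x (fun i _ => mul_nonneg (mul_self_nonneg _) (hM0 i).le)
      rw [pow_two]
      exact this
    have y2 : Q ^ 2 * wM t γ m x / g k ≤ Real.exp (d + b * (x + m) - a * k) := by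
      refine le_trans ?_ (hbound m k x)
      have h1 := meixner_point F c (c ^ (m + 1)) hc0 hc1 (by positivity) m hwM k x
      rw [div_le_iff₀ hg, inv_pow, mul_assoc, inv_mul_eq_div, le_div_iff₀ (by positivity)]
      linarith
    have y3 := exp_interp _ α hα0.le hα1 _ y1 y2
    rw [div_le_iff₀ hg] at y3
    have y4 : wM t γ m x / wfun t γ m x - 1 ≤ q ^ (x + m + 1) / (1 - q) := by
      have h1 : 0 < 1 - q ^ (x + m + 1) := by linarith
      have : wM t γ m x / wfun t γ m x - 1 = q ^ (x + m + 1) / (1 - q ^ (x + m + 1)) := by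
        rw [hw]
        field_simp
        ring
      rw [this]
      gcongr
    calc Q ^ 2 * wM t γ m x * (wM t γ m x / wfun t γ m x - 1)
        ≤ Q ^ 2 * wM t γ m x * (q ^ (x + m + 1) / (1 - q)) := by gcongr
      _ ≤ Real.exp (α * (d + b * (x + m) - a * k)) * g k * (q ^ (x + m + 1) / (1 - q)) := by
          gcongr
      _ = g k * ((Real.exp (α * (d + b * (x + m) - a * k)) * q ^ (x + m + 1)) / (1 - q)) := by ring
      _ ≤ g k * ((Real.exp (α * d) * Real.exp (-3 * γ * m - α * a * k) * s ^ x) / (1 - q)) := by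
          refine mul_le_mul_of_nonneg_left (div_le_div_of_nonneg_right ?_ hq1'.le) hg.le
          rw [hq, hs, ← Real.exp_nat_mul, ← Real.exp_nat_mul, ← Real.exp_add, ← Real.exp_add,
            ← Real.exp_add, Real.exp_le_exp]
          push_cast
          have hx : (0 : ℝ) ≤ (x : ℝ) + m := by positivity
          nlinarith [mul_le_mul_of_nonneg_right hαb hx]
      _ = g k * (A * s ^ x) := by
          rw [hA, hM']
          ring

end SixVertex
end
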